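/- arXiv:1506.04359 — 5 statements merged into one kernel-verified Lean document; each statement's English description precedes it below -/
import Mathlib

section
/- Let E be a real Hilbert space, c, n ≥ 1, 1 < p ≤ 2 with p* = p/(p−1), v_1,…,v_n ∈ E, labels y_1,…,y_n ∈ {1,…,c}, C > 0, ℓ : ℝ → ℝ any function, and nonnegative multipliers α̃_{ij} ≥ 0 for i = 1,…,n and j ∈ {1,…,c} \ {y_i}. Define α ∈ ℝ^{n×c} by α_{ij} = −α̃_{ij} for j ≠ y_i and α_{i y_i} = Σ_{j≠y_i} α̃_{ij}. Then, as an identity in the extended reals ℝ ∪ {±∞}, inf over w ∈ E^c and t ∈ ℝ^n of the Lagrangian (1/2)(Σ_{j=1}^c ‖w_j‖^p)^{2/p} + C Σ_{i=1}^n ℓ(t_i) + Σ_{i=1}^n Σ_{j≠y_i} α̃_{ij}(t_i + ⟨w_j, v_i⟩ − ⟨w_{y_i}, v_i⟩) equals −(1/2)(Σ_{j=1}^c ‖Σ_{i=1}^n α_{ij} v_i‖^{p*})^{2(p−1)/p} − C Σ_{i=1}^n ℓ*(−α_{i y_i}/C), where ℓ*(s) = sup_{t∈ℝ}(s·t − ℓ(t))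 ∈ ℝ ∪ {+∞} is the Fenchel conjugate of ℓ. -/
open RealInnerProductSpace

/-- The Fenchel conjugate `ℓ*(s) = sup_t (s·t − ℓ(t))`, valued in the extended reals. -/
noncomputable def fenchelConj (ℓ : ℝ → ℝ) (s : ℝ) : EReal :=
  ⨆ t : ℝ, ((s * t - ℓ t : ℝ) : EReal)

/-- The dual variables `α_{ij} = −α̃_{ij}` for `j ≠ y_i` and `α_{i y_i} = Σ_{j ≠ y_i} α̃_{ij}`. -/
noncomputable def dualAlpha {n c : ℕ} (y : Fin n → Fin c) (αt : Fin n → Fin c → ℝ)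
    (i : Fin n) (j : Fin c) : ℝ :=
  if j = y i then ∑ j' ∈ Finset.univ.erase (y i), αt i j' else -αt i j

/-!
Since `α` absorbs the `-α̃` and their row sums, the Lagrangian is minus a sum of two decoupled
concave expressions, one in `w` and one in `t`:
`L(w, t) = -((∑ⱼ ⟪wⱼ, uⱼ⟫ - ½‖w‖²_{2,p}) + C ∑ᵢ (sᵢ tᵢ - ℓ(tᵢ)))`, where
`uⱼ = ∑ᵢ αᵢⱼ vᵢ` and `sᵢ = -α_{i yᵢ}/C`. The infimum is therefore minus the sum of two suprema. The
first is `½‖u‖²_{2,p*}`, by Hölder's inequality and its equality case. The second separates over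
`i` into `C ∑ᵢ ℓ*(sᵢ)`. In the extended reals `⊥` is absorbing for addition, so suprema commute
with sums without side conditions.
-/

section ERealSuprema

theorem neg_iSup_ereal {ι : Sort*} (f : ι → EReal) : -⨆ x, f x = ⨅ x, -f x :=
  EReal.negOrderIso.map_iSup f

theorem coe_mul_iSup_ereal {ι : Sort*} {C : ℝ} (hC : 0 < C) (f : ι → EReal) :
    (C : EReal) * ⨆ x, f x = ⨆ x, C * f x := by
  have hgc : GaloisConnection (fun x : EReal => (C : EReal) * x) (fun x => x / C) := fun a b => by
    rw [EReal.le_div_iff_mul_le (EReal.coe_pos.2 hC) (EReal.coe_ne_top C), mul_comm]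
  exact hgc.l_iSup

theorem iSup_add_iSup_ereal {α β : Type*} (f : α → EReal) (g : β → EReal) :
    (⨆ x, f x) + ⨆ y, g y = ⨆ z : α × β, f z.1 + g z.2 := by
  refine le_antisymm (EReal.add_le_of_forall_lt fun a ha b hb => ?_)
    (iSup_le fun z => add_le_add (le_iSup f z.1) (le_iSup g z.2))
  obtain ⟨x, hx⟩ := lt_iSup_iff.1 ha
  obtain ⟨y, hy⟩ := lt_iSup_iff.1 hb
  exact (add_le_add hx.le hy.le).trans (le_iSup (fun z : α × β => f z.1 + g z.2) (x, y))

theorem sum_iSup_ereal {ι : Type*} {β : ι → Type*} [∀ i, Nonempty (β i)] (S : Finset ι)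
    (f : ∀ i, β i → EReal) :
    ∑ i ∈ S, ⨆ b, f i b = ⨆ t : ∀ i, β i, ∑ i ∈ S, f i (t i) := by
  classical
  refine le_antisymm ?_
    (iSup_le fun t => Finset.sum_le_sum fun i _ => le_iSup (f i) (t i))
  induction S using Finset.induction_on with
  | empty => simp
  | insert a S ha ih =>
    rw [Finset.sum_insert ha]
    refine (add_le_add le_rfl ih).trans ?_
    rw [iSup_add_iSup_ereal]
    refine iSup_le fun ⟨b, t⟩ => le_iSup_of_le (Function.update t a b) ?_
    rw [Finset.sum_insert ha, Function.update_self]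
    refine add_le_add le_rfl (Finset.sum_le_sum fun i hi => ?_)
    rw [Function.update_of_ne (ne_of_mem_of_not_mem hi ha)]

theorem coe_sum_ereal {ι : Type*} (S : Finset ι) (f : ι → ℝ) :
    ((∑ i ∈ S, f i : ℝ) : EReal) = ∑ i ∈ S, (f i : EReal) :=
  map_sum (⟨⟨Real.toEReal, EReal.coe_zero⟩, EReal.coe_add⟩ : ℝ →+ EReal) f S

theorem sum_fenchelConj {ι : Type*} [Fintype ι] (ℓ : ι → ℝ → ℝ) (s : ι → ℝ) :
    ∑ i, fenchelConj (ℓ i) (s i) =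
      ⨆ t : ι → ℝ, ((∑ i, (s i * t i - ℓ i (t i)) : ℝ) : EReal) := by
  simp only [fenchelConj, coe_sum_ereal]
  exact sum_iSup_ereal Finset.univ fun i (t : ℝ) => ((s i * t - ℓ i t : ℝ) : EReal)

end ERealSuprema

section MixedNorm

variable {κ : Type*} [Fintype κ] {E : κ → Type*}

/-- The norm `‖w‖_{2,p} = (∑ⱼ ‖wⱼ‖^p)^{1/p}` of a finite family of vectors, for a real exponent
`p`. The factors may be different spaces. -/
noncomputable def mixedNorm [∀ j, Norm (E j)] (p : ℝ) (w : ∀ j, E j) : ℝ :=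
  (∑ j, ‖w j‖ ^ p) ^ (1 / p)

section Seminormed

variable [∀ j, SeminormedAddCommGroup (E j)]

theorem sum_norm_rpow_nonneg (p : ℝ) (w : ∀ j, E j) : 0 ≤ ∑ j, ‖w j‖ ^ p :=
  Finset.sum_nonneg fun _ _ => by positivity

theorem mixedNorm_nonneg (p : ℝ) (w : ∀ j, E j) : 0 ≤ mixedNorm p w :=
  Real.rpow_nonneg (sum_norm_rpow_nonneg p w) _

theorem mixedNorm_rpow (p r : ℝ) (w : ∀ j, E j) :
    mixedNorm p w ^ r = (∑ j, ‖w j‖ ^ p) ^ (r / p) := by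
  rw [mixedNorm, ← Real.rpow_mul (sum_norm_rpow_nonneg p w), one_div_mul_eq_div]

theorem mixedNorm_sq (p : ℝ) (w : ∀ j, E j) :
    mixedNorm p w ^ 2 = (∑ j, ‖w j‖ ^ p) ^ (2 / p) := by
  rw [← mixedNorm_rpow, Real.rpow_two]

theorem mixedNorm_rpow_self {p : ℝ} (hp : p ≠ 0) (w : ∀ j, E j) :
    mixedNorm p w ^ p = ∑ j, ‖w j‖ ^ p := by
  rw [mixedNorm_rpow, div_self hp, Real.rpow_one]

theorem mixedNorm_zero {p : ℝ} (hp : p ≠ 0) : mixedNorm p (0 : ∀ j, E j) = 0 := by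
  simp [mixedNorm, Real.zero_rpow hp, hp]

theorem mixedNorm_smul [∀ j, NormedSpace ℝ (E j)] {p : ℝ} (hp : p ≠ 0) (r : ℝ)
    (w : ∀ j, E j) : mixedNorm p (r • w) = |r| * mixedNorm p w := by
  simp only [mixedNorm, Pi.smul_apply, norm_smul, Real.norm_eq_abs,
    Real.mul_rpow (abs_nonneg r) (norm_nonneg _), ← Finset.mul_sum]
  rw [Real.mul_rpow (by positivity) (sum_norm_rpow_nonneg p w),
    ← Real.rpow_mul (abs_nonneg r), mul_one_div_cancel hp, Real.rpow_one]

end Seminormed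

variable [∀ j, SeminormedAddCommGroup (E j)] [∀ j, InnerProductSpace ℝ (E j)] {p q : ℝ}

theorem sum_inner_le_mixedNorm_mul_mixedNorm (hpq : p.HolderConjugate q) (w u : ∀ j, E j) :
    ∑ j, ⟪w j, u j⟫ ≤ mixedNorm p w * mixedNorm q u :=
  (Finset.sum_le_sum fun _ _ => real_inner_le_norm _ _).trans <|
    Real.inner_le_Lp_mul_Lq_of_nonneg Finset.univ hpq (fun _ _ => norm_nonneg _)
      fun _ _ => norm_nonneg _

theorem norm_rpow_sub_two_smul_self {F : Type*} [SeminormedAddCommGroup F] [NormedSpace ℝ F]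
    (hq : q ≠ 1) (x : F) : ‖‖x‖ ^ (q - 2) • x‖ = ‖x‖ ^ (q - 1) := by
  have hexp : q - 2 + 1 = q - 1 := by ring
  rw [norm_smul, Real.norm_of_nonneg (by positivity), ← hexp,
    Real.rpow_add_one' (norm_nonneg x) (by rwa [hexp, sub_ne_zero])]

theorem inner_norm_rpow_sub_two_smul_self {F : Type*} [SeminormedAddCommGroup F]
    [InnerProductSpace ℝ F] (hq : q ≠ 0) (x : F) :
    ⟪‖x‖ ^ (q - 2) • x, x⟫ = ‖x‖ ^ q := by
  have hexp : q - 2 + 2 = q := by ring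
  rw [real_inner_smul_left, real_inner_self_eq_norm_sq, ← Real.rpow_two,
    ← Real.rpow_add' (norm_nonneg x) (by rwa [hexp]), hexp]

theorem mixedNorm_norm_rpow_sub_two_smul (hpq : p.HolderConjugate q) (u : ∀ j, E j) :
    mixedNorm p (fun j => ‖u j‖ ^ (q - 2) • u j) = mixedNorm q u ^ (q - 1) := by
  have hexp : (q - 1) / q = 1 / p := by
    rw [← hpq.symm.div_conj_eq_sub_one, div_div_cancel_left' hpq.symm.ne_zero, one_div]
  rw [mixedNorm_rpow, hexp, mixedNorm]
  simp only [norm_rpow_sub_two_smul_self hpq.symm.lt.ne', ← Real.rpow_mul (norm_nonneg _),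
    hpq.symm.sub_one_mul_conj]

theorem sum_inner_norm_rpow_sub_two_smul (hq : q ≠ 0) (u : ∀ j, E j) :
    ∑ j, ⟪‖u j‖ ^ (q - 2) • u j, u j⟫ = mixedNorm q u ^ q := by
  simp only [inner_norm_rpow_sub_two_smul_self hq, mixedNorm_rpow_self hq]

-- The equality case of Hölder is `wⱼ ∝ ‖uⱼ‖^(q-2) uⱼ`; the factor `‖u‖_{2,q}^(2-q)` makes the
-- two norms agree.
theorem exists_mixedNorm_eq_and_sum_inner_eq (hpq : p.HolderConjugate q) (u : ∀ j, E j) :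
    ∃ w : ∀ j, E j, mixedNorm p w = mixedNorm q u ∧ ∑ j, ⟪w j, u j⟫ = mixedNorm q u ^ 2 := by
  rcases (mixedNorm_nonneg q u).eq_or_lt with hzero | hpos
  · exact ⟨0, by rw [← hzero, mixedNorm_zero hpq.ne_zero], by simp [← hzero]⟩
  set N := mixedNorm q u
  set w₀ : ∀ j, E j := fun j => ‖u j‖ ^ (q - 2) • u j
  have norm_w₀ : mixedNorm p w₀ = N ^ (q - 1) := mixedNorm_norm_rpow_sub_two_smul hpq u
  have inner_w₀ : ∑ j, ⟪w₀ j, u j⟫ = N ^ q :=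
    sum_inner_norm_rpow_sub_two_smul hpq.symm.ne_zero u
  refine ⟨N ^ (2 - q) • w₀, ?_, ?_⟩
  · rw [mixedNorm_smul hpq.ne_zero, norm_w₀, abs_of_nonneg (by positivity),
      ← Real.rpow_add hpos, sub_add_sub_cancel, show (2 : ℝ) - 1 = 1 by norm_num, Real.rpow_one]
  · simp only [Pi.smul_apply, real_inner_smul_left]
    rw [← Finset.mul_sum, inner_w₀, ← Real.rpow_add hpos, sub_add_cancel, Real.rpow_two]

theorem isGreatest_range_sum_inner_sub_mixedNorm_sq (hpq : p.HolderConjugate q) (u : ∀ j, E j) :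
    IsGreatest (Set.range fun w : ∀ j, E j => ∑ j, ⟪w j, u j⟫ - 1 / 2 * mixedNorm p w ^ 2)
      (1 / 2 * mixedNorm q u ^ 2) := by
  constructor
  · obtain ⟨w, hnorm, hinner⟩ := exists_mixedNorm_eq_and_sum_inner_eq hpq u
    refine ⟨w, ?_⟩
    dsimp only
    rw [hnorm, hinner]
    ring
  · rintro _ ⟨w, rfl⟩
    have hHolder := sum_inner_le_mixedNorm_mul_mixedNorm hpq w u
    have hAMGM := two_mul_le_add_sq (mixedNorm p w) (mixedNorm q u)
    dsimp only
    linarith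

theorem iSup_sum_inner_sub_mixedNorm_sq (hpq : p.HolderConjugate q) (u : ∀ j, E j) :
    ⨆ w : ∀ j, E j, ((∑ j, ⟪w j, u j⟫ - 1 / 2 * mixedNorm p w ^ 2 : ℝ) : EReal) =
      ((1 / 2 * mixedNorm q u ^ 2 : ℝ) : EReal) := by
  obtain ⟨⟨w, hw⟩, hub⟩ := isGreatest_range_sum_inner_sub_mixedNorm_sq hpq u
  refine le_antisymm (iSup_le fun w' => EReal.coe_le_coe (hub ⟨w', rfl⟩)) ?_
  exact le_iSup_of_le w (EReal.coe_le_coe hw.ge)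

end MixedNorm

section Lagrangian

variable {c n : ℕ} (y : Fin n → Fin c) (αt : Fin n → Fin c → ℝ)

theorem sum_erase_mul_margin_eq (i : Fin n) (t : ℝ) (a : Fin c → ℝ) :
    ∑ j ∈ Finset.univ.erase (y i), αt i j * (t + a j - a (y i)) =
      dualAlpha y αt i (y i) * t - ∑ j, dualAlpha y αt i j * a j := by
  have diag : dualAlpha y αt i (y i) = ∑ j ∈ Finset.univ.erase (y i), αt i j := if_pos rfl
  have offDiag : ∑ j ∈ Finset.univ.erase (y i), dualAlpha y αt i j * a j =
      ∑ j ∈ Finset.univ.erase (y i), -αt i j * a j :=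
    Finset.sum_congr rfl fun j hj => by rw [dualAlpha, if_neg (Finset.ne_of_mem_erase hj)]
  rw [← Finset.add_sum_erase _ _ (Finset.mem_univ (y i)), offDiag, diag, ← sub_sub, ← mul_sub,
    Finset.sum_mul, ← Finset.sum_sub_distrib]
  exact Finset.sum_congr rfl fun j _ => by ring

variable {E : Type*} [SeminormedAddCommGroup E] [InnerProductSpace ℝ E]

theorem svm_lagrangian_eq (p : ℝ) (v : Fin n → E) {C : ℝ} (hC : C ≠ 0) (ℓ : Fin n → ℝ → ℝ)
    (w : Fin c → E) (t : Fin n → ℝ) :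
    (1 / 2) * (∑ j, ‖w j‖ ^ p) ^ (2 / p) + C * ∑ i, ℓ i (t i)
        + ∑ i, ∑ j ∈ Finset.univ.erase (y i),
            αt i j * (t i + ⟪w j, v i⟫ - ⟪w (y i), v i⟫) =
      -((∑ j, ⟪w j, ∑ i, dualAlpha y αt i j • v i⟫ - 1 / 2 * mixedNorm p w ^ 2)
        + C * ∑ i, (-(dualAlpha y αt i (y i)) / C * t i - ℓ i (t i))) := by
  have swap : ∑ j, ⟪w j, ∑ i, dualAlpha y αt i j • v i⟫ =
      ∑ i, ∑ j, dualAlpha y αt i j * ⟪w j, v i⟫ := by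
    rw [Finset.sum_comm]
    simp only [inner_sum, real_inner_smul_right]
  have cancel : C * ∑ i, -(dualAlpha y αt i (y i)) / C * t i =
      -∑ i, dualAlpha y αt i (y i) * t i := by
    rw [Finset.mul_sum, ← Finset.sum_neg_distrib]
    exact Finset.sum_congr rfl fun i _ => by field_simp
  have margins : ∑ i, ∑ j ∈ Finset.univ.erase (y i),
      αt i j * (t i + ⟪w j, v i⟫ - ⟪w (y i), v i⟫) =
      ∑ i, (dualAlpha y αt i (y i) * t i - ∑ j, dualAlpha y αt i j * ⟪w j, v i⟫) :=
    Finset.sum_congr rfl fun i _ => sum_erase_mul_margin_eq y αt i (t i) fun j => ⟪w j, v i⟫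
  rw [margins, swap, mixedNorm_sq, Finset.sum_sub_distrib, Finset.sum_sub_distrib,
    mul_sub, cancel]
  ring

end Lagrangian

theorem lp_svm_complete_dual_general {E : Type*} [SeminormedAddCommGroup E]
    [InnerProductSpace ℝ E] {c n : ℕ} (p : ℝ) (hp : 1 < p) (v : Fin n → E) (y : Fin n → Fin c)
    (C : ℝ) (hC : 0 < C) (ℓ : Fin n → ℝ → ℝ) (αt : Fin n → Fin c → ℝ) :
    (⨅ wt : (Fin c → E) × (Fin n → ℝ),
      (((1 / 2) * (∑ j, ‖wt.1 j‖ ^ p) ^ (2 / p) + C * ∑ i, ℓ i (wt.2 i)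
        + ∑ i, ∑ j ∈ Finset.univ.erase (y i),
            αt i j * (wt.2 i + ⟪wt.1 j, v i⟫ - ⟪wt.1 (y i), v i⟫) : ℝ) : EReal)) =
    ((-(1 / 2) * (∑ j, ‖∑ i, dualAlpha y αt i j • v i‖ ^ (p / (p - 1))) ^ (2 * (p - 1) / p)
        : ℝ) : EReal)
      - ((C : ℝ) : EReal) * ∑ i, fenchelConj (ℓ i) (-(dualAlpha y αt i (y i)) / C) := by
  have hpq : p.HolderConjugate (p / (p - 1)) := Real.HolderConjugate.conjExponent hp
  have hexp : 2 * (p - 1) / p = 2 / (p / (p - 1)) := by rw [div_div_eq_mul_div]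
  let u : Fin c → E := fun j => ∑ i, dualAlpha y αt i j • v i
  let s : Fin n → ℝ := fun i => -(dualAlpha y αt i (y i)) / C
  let weightPart : (Fin c → E) → EReal := fun w =>
    ((∑ j, ⟪w j, u j⟫ - 1 / 2 * mixedNorm p w ^ 2 : ℝ) : EReal)
  let lossPart : (Fin n → ℝ) → EReal := fun t => ((∑ i, (s i * t i - ℓ i (t i)) : ℝ) : EReal)
  calc
    _ = ⨅ wt : (Fin c → E) × (Fin n → ℝ), -(weightPart wt.1 + C * lossPart wt.2) := by
      simp only [svm_lagrangian_eq y αt p v hC.ne', EReal.coe_neg, EReal.coe_add, EReal.coe_mul C,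
        weightPart, lossPart, u, s]
    _ = -((⨆ w, weightPart w) + C * ⨆ t, lossPart t) := by
      rw [← neg_iSup_ereal, coe_mul_iSup_ereal hC, iSup_add_iSup_ereal]
    _ = -(((1 / 2 * mixedNorm (p / (p - 1)) u ^ 2 : ℝ) : EReal)
          + C * ∑ i, fenchelConj (ℓ i) (s i)) := by
      rw [iSup_sum_inner_sub_mixedNorm_sq hpq, sum_fenchelConj]
    _ = _ := by
      rw [EReal.neg_add (.inl (EReal.coe_ne_bot _)) (.inl (EReal.coe_ne_top _)), hexp,
        ← mixedNorm_sq, ← EReal.coe_neg, neg_mul]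

/-- **Complete dualization of the `ℓ_p`-norm multi-class SVM** (Problem 2): the infimum of
the Lagrangian over the primal variables `(w, t)` equals
`−(1/2)(Σ_j ‖Σ_i α_{ij} v_i‖^{p*})^{2(p−1)/p} − C Σ_i ℓ*(−α_{i y_i}/C)` in the extended reals. -/
theorem lp_svm_complete_dual {E : Type*} [NormedAddCommGroup E] [InnerProductSpace ℝ E]
    (c n : ℕ) (hc : 1 ≤ c) (hn : 1 ≤ n)
    (p : ℝ) (hp₁ : 1 < p) (hp₂ : p ≤ 2)
    (v : Fin n → E) (y : Fin n → Fin c) (C : ℝ) (hC : 0 < C) (ℓ : ℝ → ℝ)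
    (αt : Fin n → Fin c → ℝ) (hαt : ∀ i j, j ≠ y i → 0 ≤ αt i j) :
    (⨅ wt : (Fin c → E) × (Fin n → ℝ),
      (((1 / 2) * (∑ j, ‖wt.1 j‖ ^ p) ^ (2 / p) + C * ∑ i, ℓ (wt.2 i)
        + ∑ i, ∑ j ∈ Finset.univ.erase (y i),
            αt i j * (wt.2 i + ⟪wt.1 j, v i⟫ - ⟪wt.1 (y i), v i⟫) : ℝ) : EReal)) =
    ((-(1 / 2) * (∑ j, ‖∑ i, dualAlpha y αt i j • v i‖ ^ (p / (p - 1))) ^ (2 * (p - 1) / p)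
        : ℝ) : EReal)
      - ((C : ℝ) : EReal) * ∑ i, fenchelConj ℓ (-(dualAlpha y αt i (y i)) / C) :=
  lp_svm_complete_dual_general p hp₁ v y C hC (fun _ => ℓ) αt
end

section
/- Let E be a real Hilbert space, c, n ≥ 1, v_1,…,v_n ∈ E, labels y_1,…,y_n ∈ {1,…,c}, C > 0, β_1,…,β_c > 0, ℓ : ℝ → ℝ any function, and nonnegative multipliers α̃_{ij} ≥ 0 for i = 1,…,n and j ∈ {1,…,c} \ {y_i}. Define α ∈ ℝ^{n×c} by α_{ij} = −α̃_{ij} for j ≠ y_i and α_{i y_i} = Σ_{j≠y_i} α̃_{ij}. Then, as an identity in the extended reals, inf over w ∈ E^c and t ∈ ℝ^n of the Lagrangian Σ_{j=1}^c ‖w_j‖²/(2β_j) + C Σ_{i=1}^n ℓ(t_i) + Σ_{i=1}^n Σ_{j≠y_i} α̃_{ij}(t_i + ⟨w_j, v_i⟩ − ⟨w_{y_i}, v_i⟩) equals −(1/2) Σ_{j=1}^c β_j ‖Σ_{i=1}^n α_{ij} v_i‖² − C Σ_{i=1}^n ℓ*(−α_{i y_i}/C), where ℓ*(s) = sup_{t∈ℝ}(s·t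 − ℓ(t)); moreover, the infimum over w (for any fixed t) is attained at w_j = β_j Σ_{i=1}^n α_{ij} v_i for j = 1,…,c. -/
open RealInnerProductSpace

/-! Completing the square in each `w_j` splits the Lagrangian into nonnegative terms
`‖w_j - β_j • ∑ i, α_{ij} • v_i‖² / (2 β_j)` and a part that depends on `t` only. The former vanish
at the claimed minimizer, and the latter is a constant minus `C` times a sum of functions of the
separate coordinates `t_i`, whose suprema are the conjugates `ℓ*(-α_{i y_i} / C)`. -/

section ExtendedReals

lemma ereal_coe_sum {ι : Type*} (s : Finset ι) (f : ι → ℝ) :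
    ((∑ i ∈ s, f i : ℝ) : EReal) = ∑ i ∈ s, (f i : EReal) :=
  map_sum (⟨⟨Real.toEReal, EReal.coe_zero⟩, EReal.coe_add⟩ : ℝ →+ EReal) f s

lemma sum_iSup_eq_iSup_sum {ι : Type*} {X : ι → Type*} [∀ i, Nonempty (X i)]
    (s : Finset ι) (f : ∀ i, X i → EReal) :
    ∑ i ∈ s, ⨆ x, f i x = ⨆ t : ∀ i, X i, ∑ i ∈ s, f i (t i) := by
  classical
  refine le_antisymm ?_ (iSup_le fun t => Finset.sum_le_sum fun i _ => le_iSup (f i) (t i))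
  induction s using Finset.induction_on with
  | empty => simp
  | insert a s ha ih =>
    rw [Finset.sum_insert ha]
    refine EReal.add_le_of_forall_lt fun p hp q hq => ?_
    obtain ⟨x, hx⟩ := lt_iSup_iff.1 hp
    obtain ⟨t, ht⟩ := lt_iSup_iff.1 (hq.trans_le ih)
    have hsum : ∑ i ∈ insert a s, f i (Function.update t a x i) = f a x + ∑ i ∈ s, f i (t i) := by
      rw [Finset.sum_insert ha, Function.update_self]
      congr 1
      refine Finset.sum_congr rfl fun i hi => ?_
      rw [Function.update_of_ne (ne_of_mem_of_not_mem hi ha)]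
    calc p + q ≤ f a x + ∑ i ∈ s, f i (t i) := add_le_add hx.le ht.le
      _ = ∑ i ∈ insert a s, f i (Function.update t a x i) := hsum.symm
      _ ≤ _ := le_iSup (fun t : ∀ i, X i => ∑ i ∈ insert a s, f i (t i)) _

lemma le_coe_sub_coe_mul_iff {C : ℝ} (hC : 0 < C) (K : ℝ) (x z : EReal) :
    x ≤ K - C * z ↔ z ≤ (K - x) / C := by
  rw [EReal.le_div_iff_mul_le (EReal.coe_pos.2 hC) (EReal.coe_ne_top C), mul_comm z,
    EReal.le_sub_iff_add_le (.inr (EReal.coe_ne_bot K)) (.inr (EReal.coe_ne_top K)),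
    EReal.le_sub_iff_add_le (.inr (EReal.coe_ne_bot K)) (.inr (EReal.coe_ne_top K)), add_comm]

lemma iInf_coe_sub_coe_mul {ι : Sort*} {C : ℝ} (hC : 0 < C) (K : ℝ) (f : ι → EReal) :
    ⨅ i, ((K : EReal) - C * f i) = K - C * ⨆ i, f i :=
  eq_of_forall_le_iff fun x => by
    simp only [le_iInf_iff, le_coe_sub_coe_mul_iff hC, iSup_le_iff]

end ExtendedReals

lemma iInf_prod_eq_iInf_of_isMinOn {X T L : Type*} [CompleteLattice L] {f : X → T → L} {x₀ : X}
    (h : ∀ t, IsMinOn (f · t) Set.univ x₀) : ⨅ p : X × T, f p.1 p.2 = ⨅ t, f x₀ t :=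
  le_antisymm (le_iInf fun t => iInf_le (fun p : X × T => f p.1 p.2) (x₀, t))
    (le_iInf fun p => (iInf_le _ p.2).trans (isMinOn_univ_iff.1 (h p.2) p.1))

section InnerProduct

variable {E : Type*} [NormedAddCommGroup E] [InnerProductSpace ℝ E]

lemma norm_sub_smul_sq_div {b : ℝ} (hb : b ≠ 0) (w u : E) :
    ‖w - b • u‖ ^ 2 / (2 * b) = ‖w‖ ^ 2 / (2 * b) - ⟪w, u⟫ + 1 / 2 * (b * ‖u‖ ^ 2) := by
  rw [norm_sub_sq_real, real_inner_smul_right, norm_smul, mul_pow, Real.norm_eq_abs, sq_abs]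
  field_simp

lemma sum_sum_mul_inner {ι κ : Type*} [Fintype ι] [Fintype κ] (α : ι → κ → ℝ) (v : ι → E)
    (w : κ → E) : ∑ i, ∑ j, α i j * ⟪w j, v i⟫ = ∑ j, ⟪w j, ∑ i, α i j • v i⟫ := by
  simp only [inner_sum, real_inner_smul_right]
  exact Finset.sum_comm

end InnerProduct

lemma sum_erase_mul_margin {R κ : Type*} [CommRing R] [Fintype κ] [DecidableEq κ] {k : κ}
    {μ α : κ → R} (hself : α k = ∑ j ∈ Finset.univ.erase k, μ j) (hne : ∀ j, j ≠ k → α j = -μ j)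
    (τ : R) (s : κ → R) :
    ∑ j ∈ Finset.univ.erase k, μ j * (τ + s j - s k) = α k * τ - ∑ j, α j * s j := by
  have hoff : ∑ j ∈ Finset.univ.erase k, α j * s j = -∑ j ∈ Finset.univ.erase k, μ j * s j := by
    rw [← Finset.sum_neg_distrib]
    refine Finset.sum_congr rfl fun j hj => ?_
    rw [hne j (Finset.ne_of_mem_erase hj), neg_mul]
  rw [← Finset.add_sum_erase _ _ (Finset.mem_univ k), hoff, hself]
  simp only [mul_sub, mul_add, Finset.sum_sub_distrib, Finset.sum_add_distrib, Finset.sum_mul]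
  ring

section Lagrangian

variable {ι κ E : Type*} [Fintype ι] [Fintype κ] [DecidableEq κ] [NormedAddCommGroup E]
  [InnerProductSpace ℝ E]

/-- The Lagrangian of the multi-class SVM with class weights `β`, in the primal variables `w`
(one weight vector per class) and `t` (one margin per example). The multiplier `μ i j` belongs to
the constraint `t i ≤ ⟪w (y i), v i⟫ - ⟪w j, v i⟫`; the values `μ i (y i)` are ignored. -/
noncomputable def svmLagrangian (v : ι → E) (y : ι → κ) (C : ℝ) (β : κ → ℝ) (ℓ : ℝ → ℝ)
    (μ : ι → κ → ℝ) (w : κ → E) (t : ι → ℝ) : ℝ :=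
  ∑ j, ‖w j‖ ^ 2 / (2 * β j) + C * ∑ i, ℓ (t i)
    + ∑ i, ∑ j ∈ Finset.univ.erase (y i), μ i j * (t i + ⟪w j, v i⟫ - ⟪w (y i), v i⟫)

variable (v : ι → E) {y : ι → κ} (C : ℝ) {β : κ → ℝ} (ℓ : ℝ → ℝ) {μ α : ι → κ → ℝ}

lemma svmLagrangian_eq_sum_norm_sub_sq_add (hβ : ∀ j, β j ≠ 0)
    (hself : ∀ i, α i (y i) = ∑ j ∈ Finset.univ.erase (y i), μ i j)
    (hne : ∀ i j, j ≠ y i → α i j = -μ i j) (w : κ → E) (t : ι → ℝ) :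
    svmLagrangian v y C β ℓ μ w t =
      ∑ j, ‖w j - β j • ∑ i, α i j • v i‖ ^ 2 / (2 * β j)
        + (-(1 / 2) * ∑ j, β j * ‖∑ i, α i j • v i‖ ^ 2
          + ∑ i, (α i (y i) * t i + C * ℓ (t i))) := by
  have hmargin (i : ι) := sum_erase_mul_margin (hself i) (hne i) (t i) fun j => ⟪w j, v i⟫
  simp only [svmLagrangian, hmargin, norm_sub_smul_sq_div (hβ _), Finset.sum_add_distrib,
    Finset.sum_sub_distrib, sum_sum_mul_inner, ← Finset.mul_sum]
  ring

lemma isMinOn_svmLagrangian (hβ : ∀ j, 0 < β j)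
    (hself : ∀ i, α i (y i) = ∑ j ∈ Finset.univ.erase (y i), μ i j)
    (hne : ∀ i j, j ≠ y i → α i j = -μ i j) (t : ι → ℝ) :
    IsMinOn (fun w => svmLagrangian v y C β ℓ μ w t) Set.univ
      (fun j => β j • ∑ i, α i j • v i) := by
  refine isMinOn_univ_iff.2 fun w => ?_
  have hnonneg : 0 ≤ ∑ j, ‖w j - β j • ∑ i, α i j • v i‖ ^ 2 / (2 * β j) :=
    Finset.sum_nonneg fun j _ => div_nonneg (sq_nonneg _) (mul_pos two_pos (hβ j)).le
  simpa [svmLagrangian_eq_sum_norm_sub_sq_add v C ℓ (fun j => (hβ j).ne') hself hne] using hnonneg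

lemma svmLagrangian_minimizer (hC : C ≠ 0) (hβ : ∀ j, β j ≠ 0)
    (hself : ∀ i, α i (y i) = ∑ j ∈ Finset.univ.erase (y i), μ i j)
    (hne : ∀ i j, j ≠ y i → α i j = -μ i j) (t : ι → ℝ) :
    svmLagrangian v y C β ℓ μ (fun j => β j • ∑ i, α i j • v i) t =
      -(1 / 2) * ∑ j, β j * ‖∑ i, α i j • v i‖ ^ 2
        - C * ∑ i, (-(α i (y i)) / C * t i - ℓ (t i)) := by
  have hterm (i : ι) :
      α i (y i) * t i + C * ℓ (t i) = -(C * (-(α i (y i)) / C * t i - ℓ (t i))) := by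
    field_simp
    ring
  rw [svmLagrangian_eq_sum_norm_sub_sq_add v C ℓ hβ hself hne]
  simp only [sub_self, norm_zero, ne_eq, OfNat.ofNat_ne_zero, not_false_eq_true, zero_pow,
    zero_div, Finset.sum_const_zero, zero_add, hterm, Finset.sum_neg_distrib, Finset.mul_sum,
    sub_eq_add_neg]

theorem lp_svm_partial_dual_general (hC : 0 < C) (hβ : ∀ j, 0 < β j)
    (hself : ∀ i, α i (y i) = ∑ j ∈ Finset.univ.erase (y i), μ i j)
    (hne : ∀ i j, j ≠ y i → α i j = -μ i j) :
    (⨅ wt : (κ → E) × (ι → ℝ), (svmLagrangian v y C β ℓ μ wt.1 wt.2 : EReal)) =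
      ((-(1 / 2) * ∑ j, β j * ‖∑ i, α i j • v i‖ ^ 2 : ℝ) : EReal)
        - (C : EReal) * ∑ i, fenchelConj ℓ (-(α i (y i)) / C) ∧
    ∀ t : ι → ℝ, IsMinOn (fun w => svmLagrangian v y C β ℓ μ w t) Set.univ
      (fun j => β j • ∑ i, α i j • v i) := by
  have hmin := isMinOn_svmLagrangian v C ℓ hβ hself hne
  refine ⟨?_, hmin⟩
  set K : ℝ := -(1 / 2) * ∑ j, β j * ‖∑ i, α i j • v i‖ ^ 2
  calc ⨅ wt : (κ → E) × (ι → ℝ), (svmLagrangian v y C β ℓ μ wt.1 wt.2 : EReal)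
      = ⨅ t, (svmLagrangian v y C β ℓ μ (fun j => β j • ∑ i, α i j • v i) t : EReal) :=
        iInf_prod_eq_iInf_of_isMinOn (f := fun w t => (svmLagrangian v y C β ℓ μ w t : EReal))
          fun t => (hmin t).comp_mono EReal.coe_strictMono.monotone
    _ = ⨅ t : ι → ℝ, ((K : EReal) - C * ∑ i, ((-(α i (y i)) / C * t i - ℓ (t i) : ℝ) : EReal)) := by
        simp only [svmLagrangian_minimizer v C ℓ hC.ne' (fun j => (hβ j).ne') hself hne,
          EReal.coe_sub K, EReal.coe_mul C, ereal_coe_sum, K]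
    _ = K - C * ∑ i, fenchelConj ℓ (-(α i (y i)) / C) := by
        rw [iInf_coe_sub_coe_mul hC]
        simp only [fenchelConj, sum_iSup_eq_iSup_sum]

end Lagrangian

section DualAlpha

variable {n c : ℕ} (y : Fin n → Fin c) (αt : Fin n → Fin c → ℝ)

lemma dualAlpha_self (i : Fin n) :
    dualAlpha y αt i (y i) = ∑ j ∈ Finset.univ.erase (y i), αt i j :=
  if_pos rfl

lemma dualAlpha_of_ne (i : Fin n) (j : Fin c) (hj : j ≠ y i) : dualAlpha y αt i j = -αt i j :=
  if_neg hj

end DualAlpha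

/-- **Partial dualization of the `ℓ_p`-norm multi-class SVM with fixed class weights `β`**
(Problem 4): the infimum of the Lagrangian over the primal variables `(w, t)` equals
`−(1/2) Σ_j β_j ‖Σ_i α_{ij} v_i‖² − C Σ_i ℓ*(−α_{i y_i}/C)` in the extended reals; moreover,
for each fixed `t` the infimum over `w` is attained at `w_j = β_j Σ_i α_{ij} v_i`. -/
theorem lp_svm_partial_dual {E : Type*} [NormedAddCommGroup E] [InnerProductSpace ℝ E]
    (c n : ℕ) (hc : 1 ≤ c) (hn : 1 ≤ n)
    (v : Fin n → E) (y : Fin n → Fin c) (C : ℝ) (hC : 0 < C)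
    (β : Fin c → ℝ) (hβ : ∀ j, 0 < β j) (ℓ : ℝ → ℝ)
    (αt : Fin n → Fin c → ℝ) (hαt : ∀ i j, j ≠ y i → 0 ≤ αt i j) :
    ((⨅ wt : (Fin c → E) × (Fin n → ℝ),
      ((∑ j, ‖wt.1 j‖ ^ 2 / (2 * β j) + C * ∑ i, ℓ (wt.2 i)
        + ∑ i, ∑ j ∈ Finset.univ.erase (y i),
            αt i j * (wt.2 i + ⟪wt.1 j, v i⟫ - ⟪wt.1 (y i), v i⟫) : ℝ) : EReal)) =
    ((-(1 / 2) * ∑ j, β j * ‖∑ i, dualAlpha y αt i j • v i‖ ^ 2 : ℝ) : EReal)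
      - ((C : ℝ) : EReal) * ∑ i, fenchelConj ℓ (-(dualAlpha y αt i (y i)) / C)) ∧
    (∀ t : Fin n → ℝ, IsMinOn
      (fun w : Fin c → E =>
        ∑ j, ‖w j‖ ^ 2 / (2 * β j) + C * ∑ i, ℓ (t i)
          + ∑ i, ∑ j ∈ Finset.univ.erase (y i),
              αt i j * (t i + ⟪w j, v i⟫ - ⟪w (y i), v i⟫))
      Set.univ
      (fun j => β j • ∑ i, dualAlpha y αt i j • v i)) :=
  lp_svm_partial_dual_general v C ℓ hC hβ (dualAlpha_self y αt) (dualAlpha_of_ne y αt)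
end

section
/- Let E be a real Hilbert space, c ≥ 1, 1 ≤ p < 2, p̄ = p/(2−p), and let w = (w_1,…,w_c) ∈ E^c with w_j ≠ 0 for every j. Then for every β = (β_1,…,β_c) with β_j > 0 for all j and Σ_{j=1}^c β_j^{p̄} ≤ 1, one has Σ_{j=1}^c ‖w_j‖²/β_j ≥ (Σ_{j=1}^c ‖w_j‖^p)^{2/p} = ‖w‖_{2,p}². Moreover, the choice β_j = ‖w_j‖^{2−p} · (Σ_{j̃=1}^c ‖w_{j̃}‖^p)^{(p−2)/p} satisfies β_j > 0 and Σ_{j=1}^c β_j^{p̄} = 1 and attains equality: Σ_{j=1}^c ‖w_j‖²/β_j = ‖w‖_{2,p}². -/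
/-!
For exponents `0 < p < r` and positive reals `a j`, factor
`a j = (a j ^ r / β j) ^ (1 / r) * β j ^ (1 / r)`. Hölder's inequality with `ℓ^r` and `ℓ^q`, where
`1 / p = 1 / r + 1 / q`, bounds `∑ a j ^ p` by the objective `∑ a j ^ r / β j` and the constraint
sum `∑ β j ^ (p / (r - p))`. Equality holds when the summands of the latter are proportional to
`a j ^ p`; normalising them to total mass one yields the optimal weights. The class weights are the
case `r = 2` and `a j = ‖w j‖`.
-/

namespace ClassWeights

variable {ι : Type*} {s : Finset ι} {a β : ι → ℝ} {p r : ℝ} {j : ι}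

theorem holderTriple_div_sub (hp : 0 < p) (hpr : p < r) :
    r.HolderTriple (p * r / (r - p)) p where
  inv_add_inv_eq_inv := by
    have : r ≠ 0 := (hp.trans hpr).ne'
    field_simp
    ring
  left_pos := hp.trans hpr
  right_pos := div_pos (mul_pos hp (hp.trans hpr)) (sub_pos.2 hpr)

theorem sum_rpow_le_sum_rpow_div_mul_sum_rpow (hp : 0 < p) (hpr : p < r)
    (ha : ∀ j ∈ s, 0 ≤ a j) (hβ : ∀ j ∈ s, 0 < β j) :
    ∑ j ∈ s, a j ^ p ≤
      (∑ j ∈ s, a j ^ r / β j) ^ (p / r) * (∑ j ∈ s, β j ^ (p / (r - p))) ^ ((r - p) / r) := by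
  have hr : 0 < r := hp.trans hpr
  have hu : ∀ j ∈ s, 0 ≤ a j / β j ^ r⁻¹ := fun j hj ↦
    div_nonneg (ha j hj) (Real.rpow_nonneg (hβ j hj).le _)
  have hv : ∀ j ∈ s, 0 ≤ β j ^ r⁻¹ := fun j hj ↦ Real.rpow_nonneg (hβ j hj).le _
  have product : ∀ j ∈ s, (a j / β j ^ r⁻¹ * β j ^ r⁻¹) ^ p = a j ^ p := fun j hj ↦ by
    rw [div_mul_cancel₀ _ (Real.rpow_pos_of_pos (hβ j hj) _).ne']
  have objective : ∀ j ∈ s, (a j / β j ^ r⁻¹) ^ r = a j ^ r / β j := fun j hj ↦ by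
    rw [Real.div_rpow (ha j hj) (hv j hj), Real.rpow_inv_rpow (hβ j hj).le hr.ne']
  have constraint : ∀ j ∈ s, (β j ^ r⁻¹) ^ (p * r / (r - p)) = β j ^ (p / (r - p)) :=
    fun j hj ↦ by
      rw [← Real.rpow_mul (hβ j hj).le]
      congr 1
      field_simp
  have exponent : p / (p * r / (r - p)) = (r - p) / r := by field_simp
  simpa only [Finset.sum_congr rfl product, Finset.sum_congr rfl objective,
    Finset.sum_congr rfl constraint, exponent] using
    Real.Lr_rpow_le_Lp_mul_Lq_of_nonneg s (holderTriple_div_sub hp hpr) hu hv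

theorem rpow_sum_rpow_le_sum_rpow_div (hp : 0 < p) (hpr : p < r)
    (ha : ∀ j ∈ s, 0 ≤ a j) (hβ : ∀ j ∈ s, 0 < β j)
    (hβ_sum : ∑ j ∈ s, β j ^ (p / (r - p)) ≤ 1) :
    ((∑ j ∈ s, a j ^ p) ^ (1 / p)) ^ r ≤ ∑ j ∈ s, a j ^ r / β j := by
  have hr : 0 < r := hp.trans hpr
  have hS : 0 ≤ ∑ j ∈ s, a j ^ p := Finset.sum_nonneg fun j hj ↦ Real.rpow_nonneg (ha j hj) _
  have hA : 0 ≤ ∑ j ∈ s, a j ^ r / β j := Finset.sum_nonneg fun j hj ↦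
    div_nonneg (Real.rpow_nonneg (ha j hj) _) (hβ j hj).le
  have constraint_factor : (∑ j ∈ s, β j ^ (p / (r - p))) ^ ((r - p) / r) ≤ 1 :=
    Real.rpow_le_one (Finset.sum_nonneg fun j hj ↦ Real.rpow_nonneg (hβ j hj).le _) hβ_sum
      (div_nonneg (sub_nonneg.2 hpr.le) hr.le)
  have sum_le : ∑ j ∈ s, a j ^ p ≤ (∑ j ∈ s, a j ^ r / β j) ^ (p / r) :=
    (sum_rpow_le_sum_rpow_div_mul_sum_rpow hp hpr ha hβ).trans
      (mul_le_of_le_one_right (Real.rpow_nonneg hA _) constraint_factor)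
  calc ((∑ j ∈ s, a j ^ p) ^ (1 / p)) ^ r
      = (∑ j ∈ s, a j ^ p) ^ (p / r)⁻¹ := by
        rw [← Real.rpow_mul hS, one_div_mul_eq_div, inv_div]
    _ ≤ ∑ j ∈ s, a j ^ r / β j := (Real.rpow_inv_le_iff_of_pos hS hA (div_pos hp hr)).2 sum_le

/-- The weights minimising `∑ j ∈ s, a j ^ r / β j` subject to `∑ j ∈ s, β j ^ (p / (r - p)) ≤ 1`,
for positive `a` and `0 < p < r`. -/
noncomputable def optimalWeight (s : Finset ι) (a : ι → ℝ) (r p : ℝ) (j : ι) : ℝ :=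
  a j ^ (r - p) * (∑ i ∈ s, a i ^ p) ^ ((p - r) / p)

theorem sum_rpow_pos (hs : s.Nonempty) (ha : ∀ j ∈ s, 0 < a j) : 0 < ∑ j ∈ s, a j ^ p :=
  Finset.sum_pos (fun j hj ↦ Real.rpow_pos_of_pos (ha j hj) _) hs

theorem optimalWeight_pos (ha : ∀ j ∈ s, 0 < a j) (hj : j ∈ s) : 0 < optimalWeight s a r p j :=
  mul_pos (Real.rpow_pos_of_pos (ha j hj) _) (Real.rpow_pos_of_pos (sum_rpow_pos ⟨j, hj⟩ ha) _)

theorem optimalWeight_rpow (hp : p ≠ 0) (hpr : p ≠ r) (ha : ∀ j ∈ s, 0 < a j) (hj : j ∈ s) :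
    optimalWeight s a r p j ^ (p / (r - p)) = a j ^ p / ∑ i ∈ s, a i ^ p := by
  have hS : 0 < ∑ i ∈ s, a i ^ p := sum_rpow_pos ⟨j, hj⟩ ha
  have hrp : r - p ≠ 0 := sub_ne_zero.2 hpr.symm
  have exponent : (p - r) / p * (p / (r - p)) = -1 := by
    field_simp
    ring
  rw [optimalWeight, Real.mul_rpow (Real.rpow_nonneg (ha j hj).le _) (Real.rpow_nonneg hS.le _),
    ← Real.rpow_mul (ha j hj).le, ← Real.rpow_mul hS.le, mul_div_cancel₀ _ hrp, exponent,
    Real.rpow_neg_one, div_eq_mul_inv]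

theorem sum_optimalWeight_rpow (hs : s.Nonempty) (hp : p ≠ 0) (hpr : p ≠ r)
    (ha : ∀ j ∈ s, 0 < a j) : ∑ j ∈ s, optimalWeight s a r p j ^ (p / (r - p)) = 1 := by
  rw [Finset.sum_congr rfl fun j hj ↦ optimalWeight_rpow hp hpr ha hj, ← Finset.sum_div,
    div_self (sum_rpow_pos hs ha).ne']

theorem rpow_div_optimalWeight (ha : ∀ j ∈ s, 0 < a j) (hj : j ∈ s) :
    a j ^ r / optimalWeight s a r p j = a j ^ p * (∑ i ∈ s, a i ^ p) ^ ((r - p) / p) := by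
  have hS : 0 < ∑ i ∈ s, a i ^ p := sum_rpow_pos ⟨j, hj⟩ ha
  rw [optimalWeight, div_mul_eq_div_div, ← Real.rpow_sub (ha j hj), sub_sub_cancel,
    div_eq_mul_inv, ← Real.rpow_neg hS.le, ← neg_div, neg_sub]

theorem sum_rpow_div_optimalWeight (hs : s.Nonempty) (hp : p ≠ 0) (ha : ∀ j ∈ s, 0 < a j) :
    ∑ j ∈ s, a j ^ r / optimalWeight s a r p j = ((∑ j ∈ s, a j ^ p) ^ (1 / p)) ^ r := by
  have hS : 0 < ∑ j ∈ s, a j ^ p := sum_rpow_pos hs ha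
  calc ∑ j ∈ s, a j ^ r / optimalWeight s a r p j
      = (∑ j ∈ s, a j ^ p) * (∑ j ∈ s, a j ^ p) ^ ((r - p) / p) := by
        rw [Finset.sum_congr rfl fun j hj ↦ rpow_div_optimalWeight ha hj, ← Finset.sum_mul]
    _ = (∑ j ∈ s, a j ^ p) ^ (1 + (r - p) / p) := by rw [Real.rpow_add hS, Real.rpow_one]
    _ = ((∑ j ∈ s, a j ^ p) ^ (1 / p)) ^ r := by
        rw [← Real.rpow_mul hS.le]
        congr 1
        field_simp
        ring

end ClassWeights

theorem class_weights_update_general {ι : Type*} {s : Finset ι} (hs : s.Nonempty) {p r : ℝ}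
    (hp : 0 < p) (hpr : p < r) {a : ι → ℝ} (ha : ∀ j ∈ s, 0 < a j) :
    (∀ β : ι → ℝ, (∀ j ∈ s, 0 < β j) → ∑ j ∈ s, β j ^ (p / (r - p)) ≤ 1 →
      ((∑ j ∈ s, a j ^ p) ^ (1 / p)) ^ r ≤ ∑ j ∈ s, a j ^ r / β j) ∧
    (∀ j ∈ s, 0 < ClassWeights.optimalWeight s a r p j) ∧
    ∑ j ∈ s, ClassWeights.optimalWeight s a r p j ^ (p / (r - p)) = 1 ∧
    ∑ j ∈ s, a j ^ r / ClassWeights.optimalWeight s a r p j =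
      ((∑ j ∈ s, a j ^ p) ^ (1 / p)) ^ r :=
  ⟨fun _ ↦ ClassWeights.rpow_sum_rpow_le_sum_rpow_div hp hpr fun j hj ↦ (ha j hj).le,
    fun _ ↦ ClassWeights.optimalWeight_pos ha,
    ClassWeights.sum_optimalWeight_rpow hs hp.ne' hpr.ne ha,
    ClassWeights.sum_rpow_div_optimalWeight hs hp.ne' ha⟩

/-- **Analytic update of the class weights** (Proposition 5): for `1 ≤ p < 2`,
`p̄ = p/(2−p)`, and any admissible weights `β` (positive with `Σ_j β_j^p̄ ≤ 1`), one has
`Σ_j ‖w_j‖²/β_j ≥ ‖w‖_{2,p}²`; equality is attained at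
`β_j = ‖w_j‖^{2−p}(Σ_{j̃} ‖w_{j̃}‖^p)^{(p−2)/p}`, which is admissible with `Σ_j β_j^p̄ = 1`. -/
theorem class_weights_update {E : Type*} [NormedAddCommGroup E]
    (c : ℕ) (hc : 1 ≤ c) (p : ℝ) (hp₁ : 1 ≤ p) (hp₂ : p < 2)
    (w : Fin c → E) (hw : ∀ j, w j ≠ 0) :
    (∀ β : Fin c → ℝ, (∀ j, 0 < β j) → (∑ j, β j ^ (p / (2 - p))) ≤ 1 →
      (∑ j, ‖w j‖ ^ 2 / β j) ≥ ((∑ j, ‖w j‖ ^ p) ^ (1 / p)) ^ 2) ∧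
    (∀ j : Fin c,
      0 < ‖w j‖ ^ (2 - p) * (∑ j', ‖w j'‖ ^ p) ^ ((p - 2) / p)) ∧
    (∑ j, (‖w j‖ ^ (2 - p) * (∑ j', ‖w j'‖ ^ p) ^ ((p - 2) / p)) ^ (p / (2 - p))) = 1 ∧
    (∑ j, ‖w j‖ ^ 2 / (‖w j‖ ^ (2 - p) * (∑ j', ‖w j'‖ ^ p) ^ ((p - 2) / p))) =
      ((∑ j, ‖w j‖ ^ p) ^ (1 / p)) ^ 2 := by
  simpa only [ClassWeights.optimalWeight, Real.rpow_ofNat, Finset.mem_univ, forall_const,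
    ge_iff_le] using
    class_weights_update_general (s := Finset.univ) ⟨⟨0, hc⟩, Finset.mem_univ _⟩
      (zero_lt_one.trans_le hp₁) hp₂ fun j _ ↦ norm_pos_iff.2 (hw j)
end

section
/- Let E be a real Hilbert space, c ≥ 1, and 1 < q ≤ 2 with conjugate exponent q* = q/(q−1). Then the function f_q : E^c → ℝ defined by f_q(w) = (1/2)‖w‖_{2,q}² is (1/q*)-strongly convex with respect to the norm ‖·‖_{2,q}: for all x, y ∈ E^c and all α ∈ (0,1), f_q(αx + (1−α)y) ≤ α f_q(x) + (1−α) f_q(y) − (1/(2q*)) α(1−α) ‖x−y‖_{2,q}². -/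
/-- The `ℓ_{2,q}` block norm `‖w‖_{2,q} = (Σ_j ‖w_j‖^q)^{1/q}` on `E^c`. -/
noncomputable def norm2q {E : Type*} [NormedAddCommGroup E] {c : ℕ}
    (q : ℝ) (w : Fin c → E) : ℝ :=
  (∑ j, ‖w j‖ ^ q) ^ (1 / q)

/-!
Write `f w = ½‖w‖²` as the quasinorm `(∑ uᵢ ^ p) ^ p⁻¹` of the vector `uᵢ = ½‖wᵢ‖²`, where
`p = q / 2 ∈ [½, 1]`. Along a line `t ↦ z + t • d` one has `uᵢ'' = ‖dᵢ‖²` and, by Cauchy–Schwarz,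
`uᵢ' ^ 2 ≤ 2 uᵢ uᵢ''`. Hence the terms of `f''` of the form `(p - 1) uᵢ ^ (p - 2) uᵢ' ^ 2` cost at
most a factor `2p - 1 = q - 1`, and Hölder's inequality bounds what remains from below by the
quasinorm of `u''`, so that `f'' ≥ (q - 1)‖d‖²`. This modulus is better than `1 / q* = (q - 1) / q`.
-/

open Set Filter Topology
open scoped ENNReal

section Quasinorm

variable {ι : Type*} [Fintype ι] {p : ℝ}

/-- The `ℓ^p` quasinorm of a vector `u` of nonnegative reals. It expresses squared `ℓ^q` norms, with
`p = q / 2`, in terms of the squared norms of the coordinates. No absolute value is put around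
`u i`, so that for negative entries it takes the junk values of `Real.rpow`. -/
noncomputable def lpQuasinorm (p : ℝ) (u : ι → ℝ) : ℝ :=
  (∑ i, u i ^ p) ^ p⁻¹

lemma lpQuasinorm_const_mul (hp : p ≠ 0) {r : ℝ} (hr : 0 ≤ r) {u : ι → ℝ} (hu : ∀ i, 0 ≤ u i) :
    lpQuasinorm p (fun i ↦ r * u i) = r * lpQuasinorm p u := by
  have hsum : 0 ≤ ∑ i, u i ^ p := Finset.sum_nonneg fun i _ ↦ Real.rpow_nonneg (hu i) p
  simp only [lpQuasinorm, Real.mul_rpow hr (hu _), ← Finset.mul_sum]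
  rw [Real.mul_rpow (Real.rpow_nonneg hr p) hsum, Real.rpow_rpow_inv hr hp]

lemma lpQuasinorm_le_rpow_sum_mul_sum (hp₀ : 0 < p) (hp₁ : p ≤ 1) {a u : ι → ℝ}
    (ha : ∀ i, 0 ≤ a i) (hu : ∀ i, 0 < u i) :
    lpQuasinorm p a ≤ (∑ i, u i ^ p) ^ (p⁻¹ - 1) * ∑ i, u i ^ (p - 1) * a i := by
  have hS : 0 ≤ ∑ i, u i ^ p := Finset.sum_nonneg fun i _ ↦ Real.rpow_nonneg (hu i).le p
  have hT : 0 ≤ ∑ i, u i ^ (p - 1) * a i :=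
    Finset.sum_nonneg fun i _ ↦ mul_nonneg (Real.rpow_nonneg (hu i).le _) (ha i)
  have hpow (i : ι) : u i ^ p * (a i / u i) ^ p = a i ^ p := by
    rw [← Real.mul_rpow (hu i).le (div_nonneg (ha i) (hu i).le), mul_div_cancel₀ _ (hu i).ne']
  have hlin (i : ι) : u i ^ p * ((a i / u i) ^ p) ^ p⁻¹ = u i ^ (p - 1) * a i := by
    rw [Real.rpow_rpow_inv (div_nonneg (ha i) (hu i).le) hp₀.ne', Real.rpow_sub_one (hu i).ne']
    ring
  have holder : ∑ i, a i ^ p ≤ (∑ i, u i ^ p) ^ (1 - p) * (∑ i, u i ^ (p - 1) * a i) ^ p := by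
    simpa only [hpow, hlin, inv_inv] using
      Real.inner_le_weight_mul_Lp_of_nonneg Finset.univ ((one_le_inv₀ hp₀).mpr hp₁)
        (fun i ↦ u i ^ p) (fun i ↦ (a i / u i) ^ p) (fun i ↦ Real.rpow_nonneg (hu i).le p)
        (fun i ↦ Real.rpow_nonneg (div_nonneg (ha i) (hu i).le) p)
  calc lpQuasinorm p a
      ≤ ((∑ i, u i ^ p) ^ (1 - p) * (∑ i, u i ^ (p - 1) * a i) ^ p) ^ p⁻¹ :=
        Real.rpow_le_rpow (Finset.sum_nonneg fun i _ ↦ Real.rpow_nonneg (ha i) p) holder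
          (inv_nonneg.mpr hp₀.le)
    _ = (∑ i, u i ^ p) ^ (p⁻¹ - 1) * ∑ i, u i ^ (p - 1) * a i := by
        rw [Real.mul_rpow (Real.rpow_nonneg hS _) (Real.rpow_nonneg hT _),
          Real.rpow_rpow_inv hT hp₀.ne', ← Real.rpow_mul hS, sub_mul, one_mul,
          mul_inv_cancel₀ hp₀.ne']

lemma sum_rpow_pos [Nonempty ι] {u : ι → ℝ} (hu : ∀ i, 0 < u i) : 0 < ∑ i, u i ^ p :=
  Finset.sum_pos (fun i _ ↦ Real.rpow_pos_of_pos (hu i) p) Finset.univ_nonempty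

lemma hasDerivAt_sum_rpow {u : ι → ℝ → ℝ} {u' : ι → ℝ} {t : ℝ} (hu : ∀ i, 0 < u i t)
    (hu' : ∀ i, HasDerivAt (u i) (u' i) t) :
    HasDerivAt (fun s ↦ ∑ i, u i s ^ p) (p * ∑ i, u i t ^ (p - 1) * u' i) t := by
  refine (HasDerivAt.fun_sum fun i _ ↦
    (hu' i).rpow_const (p := p) (Or.inl (hu i).ne')).congr_deriv ?_
  rw [Finset.mul_sum]
  exact Finset.sum_congr rfl fun i _ ↦ by ring

lemma hasDerivAt_lpQuasinorm [Nonempty ι] (hp : p ≠ 0) {u : ι → ℝ → ℝ} {u' : ι → ℝ} {t : ℝ}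
    (hu : ∀ i, 0 < u i t) (hu' : ∀ i, HasDerivAt (u i) (u' i) t) :
    HasDerivAt (fun s ↦ lpQuasinorm p fun i ↦ u i s)
      ((∑ i, u i t ^ p) ^ (p⁻¹ - 1) * ∑ i, u i t ^ (p - 1) * u' i) t := by
  refine ((hasDerivAt_sum_rpow (p := p) hu hu').rpow_const (p := p⁻¹)
    (Or.inl (sum_rpow_pos hu).ne')).congr_deriv ?_
  field_simp

lemma hasDerivAt_lpQuasinorm_deriv [Nonempty ι] (hp : p ≠ 0) {u u' : ι → ℝ → ℝ} {u'' : ι → ℝ}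
    {t : ℝ} (hu : ∀ i, 0 < u i t) (hu' : ∀ i, HasDerivAt (u i) (u' i t) t)
    (hu'' : ∀ i, HasDerivAt (u' i) (u'' i) t) :
    HasDerivAt (fun s ↦ (∑ i, u i s ^ p) ^ (p⁻¹ - 1) * ∑ i, u i s ^ (p - 1) * u' i s)
      ((1 - p) * (∑ i, u i t ^ p) ^ (p⁻¹ - 2) * (∑ i, u i t ^ (p - 1) * u' i t) ^ 2 +
        (∑ i, u i t ^ p) ^ (p⁻¹ - 1) *
          ∑ i, ((p - 1) * u i t ^ (p - 2) * u' i t ^ 2 + u i t ^ (p - 1) * u'' i)) t := by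
  have hfactor := (hasDerivAt_sum_rpow (p := p) hu hu').rpow_const (p := p⁻¹ - 1)
    (Or.inl (sum_rpow_pos hu).ne')
  have hsum : HasDerivAt (fun s ↦ ∑ i, u i s ^ (p - 1) * u' i s)
      (∑ i, ((p - 1) * u i t ^ (p - 2) * u' i t ^ 2 + u i t ^ (p - 1) * u'' i)) t := by
    refine HasDerivAt.fun_sum fun i _ ↦ ?_
    refine (((hu' i).rpow_const (p := p - 1) (Or.inl (hu i).ne')).mul (hu'' i)).congr_deriv ?_
    rw [sub_sub, one_add_one_eq_two]
    ring
  refine (hfactor.mul hsum).congr_deriv ?_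
  rw [sub_sub, one_add_one_eq_two]
  field_simp

lemma two_mul_sub_one_mul_rpow_le (hp₁ : p ≤ 1) {u v a : ℝ} (hu : 0 < u)
    (hv : v ^ 2 ≤ 2 * u * a) :
    (2 * p - 1) * (u ^ (p - 1) * a) ≤ (p - 1) * u ^ (p - 2) * v ^ 2 + u ^ (p - 1) * a := by
  have hpow : u ^ (p - 1) = u ^ (p - 2) * u := by
    rw [← Real.rpow_add_one hu.ne']
    congr 1
    ring
  have hbound := mul_le_mul_of_nonneg_left hv
    (mul_nonneg (sub_nonneg.mpr hp₁) (Real.rpow_nonneg hu.le (p - 2)))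
  rw [hpow]
  linarith

lemma mul_lpQuasinorm_le_second_deriv (hp₀ : 1 / 2 ≤ p) (hp₁ : p ≤ 1) {u u' u'' : ι → ℝ}
    (hu'' : ∀ i, 0 ≤ u'' i) (hu : ∀ i, 0 < u i) (hdisc : ∀ i, u' i ^ 2 ≤ 2 * u i * u'' i) :
    (2 * p - 1) * lpQuasinorm p u'' ≤
      (1 - p) * (∑ i, u i ^ p) ^ (p⁻¹ - 2) * (∑ i, u i ^ (p - 1) * u' i) ^ 2 +
        (∑ i, u i ^ p) ^ (p⁻¹ - 1) *
          ∑ i, ((p - 1) * u i ^ (p - 2) * u' i ^ 2 + u i ^ (p - 1) * u'' i) := by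
  have hS : 0 ≤ ∑ i, u i ^ p := Finset.sum_nonneg fun i _ ↦ Real.rpow_nonneg (hu i).le p
  have hgradient : 0 ≤ (1 - p) * (∑ i, u i ^ p) ^ (p⁻¹ - 2) * (∑ i, u i ^ (p - 1) * u' i) ^ 2 :=
    mul_nonneg (mul_nonneg (sub_nonneg.mpr hp₁) (Real.rpow_nonneg hS _)) (sq_nonneg _)
  calc (2 * p - 1) * lpQuasinorm p u''
      ≤ (2 * p - 1) * ((∑ i, u i ^ p) ^ (p⁻¹ - 1) * ∑ i, u i ^ (p - 1) * u'' i) :=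
        mul_le_mul_of_nonneg_left
          (lpQuasinorm_le_rpow_sum_mul_sum (by linarith) hp₁ hu'' hu) (by linarith)
    _ = (∑ i, u i ^ p) ^ (p⁻¹ - 1) * ∑ i, (2 * p - 1) * (u i ^ (p - 1) * u'' i) := by
        rw [← Finset.mul_sum, mul_left_comm]
    _ ≤ (∑ i, u i ^ p) ^ (p⁻¹ - 1) *
        ∑ i, ((p - 1) * u i ^ (p - 2) * u' i ^ 2 + u i ^ (p - 1) * u'' i) :=
        mul_le_mul_of_nonneg_left (Finset.sum_le_sum fun i _ ↦
          two_mul_sub_one_mul_rpow_le hp₁ (hu i) (hdisc i)) (Real.rpow_nonneg hS _)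
    _ ≤ _ := le_add_of_nonneg_left hgradient

lemma strongConvexOn_lpQuasinorm [Nonempty ι] (hp₀ : 1 / 2 ≤ p) (hp₁ : p ≤ 1)
    {u u' : ι → ℝ → ℝ} {a : ι → ℝ} (ha : ∀ i, 0 ≤ a i) (hu : ∀ i t, 0 < u i t)
    (hu' : ∀ i t, HasDerivAt (u i) (u' i t) t) (hu'' : ∀ i t, HasDerivAt (u' i) (a i) t)
    (hdisc : ∀ i t, u' i t ^ 2 ≤ 2 * u i t * a i) :
    StrongConvexOn univ ((2 * p - 1) * lpQuasinorm p a) fun t ↦ lpQuasinorm p fun i ↦ u i t := by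
  have hp : p ≠ 0 := by linarith
  set m := (2 * p - 1) * lpQuasinorm p a
  have hsq (t : ℝ) : HasDerivAt (fun t : ℝ ↦ m / 2 * t ^ 2) (m * t) t := by
    refine ((hasDerivAt_pow 2 t).const_mul (m / 2)).congr_deriv ?_
    push_cast
    ring
  have hlin (t : ℝ) : HasDerivAt (fun t : ℝ ↦ m * t) m t := by
    simpa using (hasDerivAt_id t).const_mul m
  have hderiv (t : ℝ) :=
    (hasDerivAt_lpQuasinorm hp (hu · t) (hu' · t)).sub (hsq t)
  have hderiv2 (t : ℝ) :=
    (hasDerivAt_lpQuasinorm_deriv hp (hu · t) (hu' · t) (hu'' · t)).sub (hlin t)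
  rw [strongConvexOn_iff_convex]
  simp only [Real.norm_eq_abs, sq_abs]
  refine convexOn_of_hasDerivWithinAt2_nonneg convex_univ
    (fun t _ ↦ (hderiv t).continuousAt.continuousWithinAt)
    (fun t _ ↦ (hderiv t).hasDerivWithinAt) (fun t _ ↦ (hderiv2 t).hasDerivWithinAt)
    fun t _ ↦ sub_nonneg.mpr ?_
  exact mul_lpQuasinorm_le_second_deriv hp₀ hp₁ ha (hu · t) (hdisc · t)

end Quasinorm

section StrongConvexity

variable {E : Type*} [NormedAddCommGroup E] [NormedSpace ℝ E] {m : ℝ} {f : E → ℝ}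

lemma strongConvexOn_of_tendsto {s : Set E} {κ : Type*} {l : Filter κ} [l.NeBot]
    {F : κ → E → ℝ} (hF : ∀ᶠ k in l, StrongConvexOn s m (F k))
    (hlim : ∀ x ∈ s, Tendsto (F · x) l (𝓝 (f x))) : StrongConvexOn s m f := by
  obtain ⟨k, hk⟩ := hF.exists
  refine ⟨hk.1, fun x hx y hy a b ha hb hab ↦ ?_⟩
  exact le_of_tendsto_of_tendsto (hlim _ (hk.1 hx hy ha hb hab))
    ((((hlim x hx).const_smul a).add ((hlim y hy).const_smul b)).sub_const _)
    (hF.mono fun k hk ↦ hk.2 hx hy ha hb hab)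

lemma strongConvexOn_univ_of_line
    (hline : ∀ z d : E, StrongConvexOn univ (m * ‖d‖ ^ 2) fun t : ℝ ↦ f (z + t • d)) :
    StrongConvexOn univ m f := by
  refine ⟨convex_univ, fun x _ y _ a b ha hb hab ↦ ?_⟩
  have h := (hline y (x - y)).2 (mem_univ (1 : ℝ)) (mem_univ 0) ha hb hab
  have hpoint : y + a • (x - y) = a • x + b • y := by
    rw [eq_sub_of_add_eq' hab]
    module
  simp only [smul_eq_mul, mul_one, mul_zero, add_zero, one_smul, zero_smul, add_sub_cancel,
    sub_zero, norm_one, one_pow, hpoint] at h ⊢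
  linarith

end StrongConvexity

section PiLp

variable {ι : Type*} [Fintype ι] {E : ι → Type*} [∀ i, NormedAddCommGroup (E i)]

lemma continuous_lpQuasinorm {p : ℝ} (hp : 0 ≤ p) :
    Continuous (lpQuasinorm p : (ι → ℝ) → ℝ) := by
  refine Continuous.rpow_const ?_ fun _ ↦ Or.inr (inv_nonneg.mpr hp)
  exact continuous_finsetSum _ fun i _ ↦ (continuous_apply i).rpow_const fun _ ↦ Or.inr hp

lemma sq_norm_piLp_eq_lpQuasinorm {p : ℝ≥0∞} (hp : 0 < p.toReal) (w : PiLp p E) :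
    ‖w‖ ^ 2 = lpQuasinorm (p.toReal / 2) fun i ↦ ‖w i‖ ^ 2 := by
  have hsum : 0 ≤ ∑ i, ‖w i‖ ^ p.toReal :=
    Finset.sum_nonneg fun i _ ↦ Real.rpow_nonneg (norm_nonneg _) _
  have hcoord (i : ι) : (‖w i‖ ^ 2) ^ (p.toReal / 2) = ‖w i‖ ^ p.toReal := by
    rw [← Real.rpow_natCast_mul (norm_nonneg _), Nat.cast_ofNat, mul_div_cancel₀ _ two_ne_zero]
  simp only [lpQuasinorm, hcoord]
  rw [PiLp.norm_eq_sum hp, ← Real.rpow_mul_natCast hsum]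
  congr 1
  push_cast
  field_simp

lemma half_sq_norm_piLp_eq_lpQuasinorm {p : ℝ≥0∞} (hp : 0 < p.toReal) (w : PiLp p E) :
    1 / 2 * ‖w‖ ^ 2 = lpQuasinorm (p.toReal / 2) fun i ↦ 1 / 2 * ‖w i‖ ^ 2 := by
  rw [sq_norm_piLp_eq_lpQuasinorm hp, lpQuasinorm_const_mul (half_pos hp).ne' one_half_pos.le
    fun i ↦ sq_nonneg _]

variable [∀ i, InnerProductSpace ℝ (E i)]

-- The shift by `ε` keeps every coordinate positive, where `u ↦ u ^ p` is smooth.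
lemma strongConvexOn_lpQuasinorm_half_norm_sq_add [Nonempty ι] {p : ℝ} (hp₀ : 1 / 2 ≤ p)
    (hp₁ : p ≤ 1) (z d : ∀ i, E i) {ε : ℝ} (hε : 0 < ε) :
    StrongConvexOn univ ((2 * p - 1) * lpQuasinorm p fun i ↦ ‖d i‖ ^ 2)
      fun t : ℝ ↦ lpQuasinorm p fun i ↦ 1 / 2 * ‖z i + t • d i‖ ^ 2 + ε := by
  have hline (i : ι) (t : ℝ) : HasDerivAt (fun t : ℝ ↦ z i + t • d i) (d i) t := by
    simpa using ((hasDerivAt_id t).smul_const (d i)).const_add (z i)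
  refine strongConvexOn_lpQuasinorm (u' := fun i t ↦ inner ℝ (z i + t • d i) (d i)) hp₀ hp₁
    (fun i ↦ sq_nonneg _) (fun i t ↦ by positivity) (fun i t ↦ ?_) (fun i t ↦ ?_) fun i t ↦ ?_
  · exact (((hline i t).norm_sq.const_mul (1 / 2)).add_const ε).congr_deriv (by ring)
  · simpa using (hline i t).inner ℝ (hasDerivAt_const t (d i))
  · calc inner ℝ (z i + t • d i) (d i) ^ 2 ≤ ‖z i + t • d i‖ ^ 2 * ‖d i‖ ^ 2 := by
          rw [← mul_pow, ← sq_abs]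
          gcongr
          exact abs_real_inner_le_norm _ _
      _ ≤ 2 * (1 / 2 * ‖z i + t • d i‖ ^ 2 + ε) * ‖d i‖ ^ 2 := by
          gcongr
          linarith

lemma strongConvexOn_lpQuasinorm_half_norm_sq [Nonempty ι] {p : ℝ} (hp₀ : 1 / 2 ≤ p)
    (hp₁ : p ≤ 1) (z d : ∀ i, E i) :
    StrongConvexOn univ ((2 * p - 1) * lpQuasinorm p fun i ↦ ‖d i‖ ^ 2)
      fun t : ℝ ↦ lpQuasinorm p fun i ↦ 1 / 2 * ‖z i + t • d i‖ ^ 2 := by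
  refine strongConvexOn_of_tendsto (l := 𝓝[>] (0 : ℝ))
    (eventually_mem_nhdsWithin.mono fun ε hε ↦
      strongConvexOn_lpQuasinorm_half_norm_sq_add hp₀ hp₁ z d hε) fun t _ ↦ ?_
  have hcont : Continuous fun ε : ℝ ↦ lpQuasinorm p fun i ↦ 1 / 2 * ‖z i + t • d i‖ ^ 2 + ε :=
    (continuous_lpQuasinorm (by linarith)).comp (by fun_prop)
  simpa only [add_zero] using (hcont.tendsto 0).mono_left nhdsWithin_le_nhds

theorem strongly_convex_half_sq_norm2q_general {p : ℝ≥0∞} [Fact (1 ≤ p)] (hp : p ≤ 2) :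
    StrongConvexOn univ (p.toReal - 1) fun w : PiLp p E ↦ 1 / 2 * ‖w‖ ^ 2 := by
  have h1 : 1 ≤ p.toReal := by
    simpa using ENNReal.toReal_mono (ne_top_of_le_ne_top (by simp) hp) (Fact.out : 1 ≤ p)
  have h2 : p.toReal ≤ 2 := by simpa using ENNReal.toReal_mono (by simp) hp
  have hpos : 0 < p.toReal := by linarith
  refine strongConvexOn_univ_of_line fun z d ↦ ?_
  rcases isEmpty_or_nonempty ι
  · have hzero (w : PiLp p E) : ‖w‖ = 0 := by rw [Subsingleton.elim w 0, norm_zero]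
    simpa [hzero] using convexOn_const 0 convex_univ
  · simpa only [half_sq_norm_piLp_eq_lpQuasinorm hpos, sq_norm_piLp_eq_lpQuasinorm hpos d,
      mul_div_cancel₀ _ (two_ne_zero' ℝ)] using!
      strongConvexOn_lpQuasinorm_half_norm_sq (p := p.toReal / 2) (by linarith) (by linarith) z d

end PiLp

lemma norm2q_eq_norm_toLp {E : Type*} [NormedAddCommGroup E] {c : ℕ} {q : ℝ} (hq : 0 < q)
    (w : Fin c → E) : norm2q q w = ‖WithLp.toLp (ENNReal.ofReal q) w‖ := by
  have hq' : (ENNReal.ofReal q).toReal = q := ENNReal.toReal_ofReal hq.le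
  rw [PiLp.norm_eq_sum (by rwa [hq']), hq', norm2q]

lemma half_sq_norm2q_le_of_strongConvexOn {E : Type*} [NormedAddCommGroup E] [NormedSpace ℝ E]
    {c : ℕ} {q m : ℝ} [Fact (1 ≤ ENNReal.ofReal q)]
    (hconv : StrongConvexOn univ m
      fun w : PiLp (ENNReal.ofReal q) (fun _ : Fin c ↦ E) ↦ 1 / 2 * ‖w‖ ^ 2)
    (x y : Fin c → E) {a : ℝ} (ha : a ∈ Icc 0 1) :
    1 / 2 * norm2q q (a • x + (1 - a) • y) ^ 2 ≤
      a * (1 / 2 * norm2q q x ^ 2) + (1 - a) * (1 / 2 * norm2q q y ^ 2) -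
        m / 2 * a * (1 - a) * norm2q q (x - y) ^ 2 := by
  have hq : 0 < q := zero_lt_one.trans_le (ENNReal.one_le_ofReal.mp Fact.out)
  simp only [norm2q_eq_norm_toLp hq, WithLp.toLp_add, WithLp.toLp_sub, WithLp.toLp_smul]
  refine (hconv.2 (mem_univ (WithLp.toLp _ x)) (mem_univ (WithLp.toLp _ y)) ha.1
    (sub_nonneg.mpr ha.2) (add_sub_cancel a 1)).trans_eq ?_
  simp only [smul_eq_mul]
  ring

lemma inv_conjExponent_le_sub_one {q : ℝ} (hq : 1 ≤ q) : (q / (q - 1))⁻¹ ≤ q - 1 := by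
  rw [inv_div]
  exact div_le_self (sub_nonneg.mpr hq) hq

/-- **Strong convexity of `f_q = (1/2)‖·‖_{2,q}²`** (key step in the proof of Corollary 4):
for `1 < q ≤ 2` and `q* = q/(q−1)`, the function `f_q` is `(1/q*)`-strongly convex with
respect to the norm `‖·‖_{2,q}` on `E^c`. -/
theorem strongly_convex_half_sq_norm2q {E : Type*} [NormedAddCommGroup E]
    [InnerProductSpace ℝ E] (c : ℕ) (hc : 1 ≤ c) (q : ℝ) (hq₁ : 1 < q) (hq₂ : q ≤ 2) :
    ∀ x y : Fin c → E, ∀ a ∈ Set.Ioo (0 : ℝ) 1,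
      (1 / 2) * (norm2q q (a • x + (1 - a) • y)) ^ 2 ≤
        a * ((1 / 2) * (norm2q q x) ^ 2) + (1 - a) * ((1 / 2) * (norm2q q y) ^ 2)
          - (1 / (2 * (q / (q - 1)))) * a * (1 - a) * (norm2q q (x - y)) ^ 2 := by
  intro x y a ha
  have : Fact (1 ≤ ENNReal.ofReal q) := ⟨ENNReal.one_le_ofReal.mpr hq₁.le⟩
  have hmodulus : (q / (q - 1))⁻¹ ≤ (ENNReal.ofReal q).toReal - 1 := by
    rw [ENNReal.toReal_ofReal (by linarith)]
    exact inv_conjExponent_le_sub_one hq₁.le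
  have hconv := strongly_convex_half_sq_norm2q_general (E := fun _ : Fin c ↦ E)
    (p := ENNReal.ofReal q) (ENNReal.ofReal_le_ofNat.mpr hq₂)
  rw [one_div (2 * (q / (q - 1))), mul_inv_rev, ← div_eq_mul_inv]
  exact half_sq_norm2q_le_of_strongConvexOn (hconv.mono hmodulus) x y (Ioo_subset_Icc_self ha)
end

section
/- Let c ≥ 2, n ≥ 1, let X be a measurable space, E a real Hilbert space, φ : X → E a measurable feature map with kernel k(x,x) = ‖φ(x)‖², let 1 < q ≤ 2 with q* = q/(q−1), and let Λ > 0. Let H_{q,Λ} = {h^w : x ↦ (⟨w_1,φ(x)⟩,…,⟨w_c,φ(x)⟩) : w ∈ E^c, ‖w‖_{2,q} ≤ Λ}. Let ℓ be an L-regular loss with B_ℓ := sup_{(x,y),h∈H_{q,Λ}} ℓ(ρ_h(x,y)) finite, and assume the relevant suprema are measurable (e.g., taken over a countable dense family) and integrable. Let τ_{q*} = (E|g|^{q*})^{1/q*} be the q*-th moment of a standard Gaussian g. Then for every δ ∈ (0,1), with P^⊗n-probability at least 1 − δ over the sample ((x_1,y_1),…,(x_n,y_n)), every w with ‖w‖_{2,q}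 ≤ Λ satisfies R(h^w) ≤ (1/n) Σ_{i=1}^n ℓ(ρ_{h^w}(x_i,y_i)) + (4LΛ c^{1/q*} τ_{q*}/n) √((π q*/2) Σ_{i=1}^n k(x_i,x_i)) + 3 B_ℓ √(log(2/δ)/(2n)). -/
open MeasureTheory ProbabilityTheory Real RealInnerProductSpace

/-- The multi-class margin `ρ_h(x, y) = h_y(x) - max_{y' ≠ y} h_{y'}(x)`. -/
noncomputable def mcMargin {X : Type*} {c : ℕ} (h : X → Fin c → ℝ) (x : X) (y : Fin c) : ℝ :=
  h x y - ⨆ y' : {y' : Fin c // y' ≠ y}, h x y'.1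

/-!
By McDiarmid's inequality, applied both to the supremum of the deviations between risk and empirical
loss and to the empirical Rademacher complexity, it suffices to bound the latter. Signs are traded
for Gaussians at the cost of a factor `√(π / 2)`; since the margin is `√2`-Lipschitz in the score
vector, a Gaussian contraction inequality removes the loss and leaves a linear functional of `w`.
Hölder's inequality bounds this by `Λ` times the dual block norm of `c` Gaussian vectors
`∑ k, g k j • φ (x k)`, whose `p`-th moments are controlled by the scalar Gaussian moment.

McDiarmid's inequality needs suprema over countable families, whereas `E` may be non-separable.
There is a closed separable subspace `F` such that every vector of `Fᗮ` is almost surely orthogonal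
to the features. Projecting `w` to `F` leaves the risk unchanged, and the residuals of the sampled
features may be assumed mutually orthogonal, so that Bessel's inequality absorbs the change of the
empirical loss into the slack of the constant `4`.
-/

open scoped NNReal ENNReal

section PiSucc

variable {n : ℕ} {Ω : Fin (n + 1) → Type*} [∀ i, MeasurableSpace (Ω i)]
  {μ : ∀ i, Measure (Ω i)} [∀ i, SigmaFinite (μ i)]

theorem measurePreserving_finCons :
    MeasurePreserving (fun z : Ω 0 × (∀ i : Fin n, Ω i.succ) ↦ (Fin.cons z.1 z.2 : ∀ i, Ω i))
      ((μ 0).prod (Measure.pi fun i ↦ μ i.succ)) (Measure.pi μ) := by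
  have hcons : (fun z : Ω 0 × (∀ i : Fin n, Ω i.succ) ↦ (Fin.cons z.1 z.2 : ∀ i, Ω i)) =
      (MeasurableEquiv.piFinSuccAbove Ω 0).symm := by
    funext z i
    cases i using Fin.cases <;> rfl
  rw [hcons]
  exact (measurePreserving_piFinSuccAbove μ 0).symm

theorem integrable_comp_finCons {F : (∀ i, Ω i) → ℝ} (hF : Integrable F (Measure.pi μ)) :
    Integrable (fun z : Ω 0 × (∀ i : Fin n, Ω i.succ) ↦ F (Fin.cons z.1 z.2))
      ((μ 0).prod (Measure.pi fun i ↦ μ i.succ)) :=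
  measurePreserving_finCons.integrable_comp_of_integrable hF

theorem integral_pi_succ {F : (∀ i, Ω i) → ℝ} (hF : Integrable F (Measure.pi μ)) :
    ∫ s, F s ∂Measure.pi μ =
      ∫ z : Ω 0 × (∀ i : Fin n, Ω i.succ), F (Fin.cons z.1 z.2)
        ∂(μ 0).prod (Measure.pi fun i ↦ μ i.succ) := by
  rw [← measurePreserving_finCons.map_eq, integral_map]
  · exact measurePreserving_finCons.aemeasurable
  · rw [measurePreserving_finCons.map_eq]
    exact hF.aestronglyMeasurable

end PiSucc

section BoundedDifferences

variable {α β : Type*} [MeasurableSpace α] [MeasurableSpace β]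

theorem hasSubgaussianMGF_sub_integral_of_sub_le {μ : Measure α} [IsProbabilityMeasure μ]
    {F : α → ℝ} (hF : Measurable F) {c : ℝ≥0} (hFc : ∀ x y, F x - F y ≤ c) :
    HasSubgaussianMGF (fun x ↦ F x - ∫ y, F y ∂μ) ((c / 2) ^ 2) μ := by
  have : Nonempty α := nonempty_of_isProbabilityMeasure μ
  have hbdd : BddBelow (Set.range F) := by
    obtain ⟨x⟩ := ‹Nonempty α›
    refine ⟨F x - c, ?_⟩
    rintro _ ⟨y, rfl⟩
    linarith [hFc x y]
  have hmem : ∀ x, F x ∈ Set.Icc (⨅ y, F y) ((⨅ y, F y) + c) := fun x ↦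
    ⟨ciInf_le hbdd x, sub_le_iff_le_add.1 (le_ciInf fun y ↦ by linarith [hFc x y])⟩
  simpa using hasSubgaussianMGF_of_mem_Icc (μ := μ) hF.aemeasurable (.of_forall hmem)

theorem hasSubgaussianMGF_add_of_prod {μ : Measure α} {ν : Measure β} [SFinite μ] [SFinite ν]
    {X : α → ℝ} {Y : α × β → ℝ} {c d : ℝ≥0} (hX : HasSubgaussianMGF X c μ)
    (hYm : AEStronglyMeasurable Y (μ.prod ν))
    (hY : ∀ x, HasSubgaussianMGF (fun y ↦ Y (x, y)) d ν) :
    HasSubgaussianMGF (fun z : α × β ↦ X z.1 + Y z) (c + d) (μ.prod ν) := by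
  have hsection : ∀ t x, ∫ y, exp (t * (X x + Y (x, y))) ∂ν ≤
      exp (d * t ^ 2 / 2) * exp (t * X x) := fun t x ↦ by
    simp only [mul_add, exp_add, integral_const_mul]
    rw [mul_comm]
    exact mul_le_mul_of_nonneg_right ((hY x).mgf_le t) (exp_nonneg _)
  have hmeas : ∀ t, AEStronglyMeasurable (fun z : α × β ↦ exp (t * (X z.1 + Y z))) (μ.prod ν) :=
    fun t ↦ (continuous_exp.comp_aestronglyMeasurable
      ((hX.aestronglyMeasurable.comp_fst.add hYm).const_mul t))
  have hint : ∀ t, Integrable (fun z : α × β ↦ exp (t * (X z.1 + Y z))) (μ.prod ν) := by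
    refine fun t ↦ (integrable_prod_iff (hmeas t)).2 ⟨.of_forall fun x ↦ ?_, ?_⟩
    · simp only [mul_add, exp_add]
      exact ((hY x).integrable_exp_mul t).const_mul _
    · refine ((hX.integrable_exp_mul t).const_mul (exp (d * t ^ 2 / 2))).mono'
        (hmeas t).norm.integral_prod_right' (.of_forall fun x ↦ ?_)
      simp only [norm_of_nonneg (exp_nonneg _),
        norm_of_nonneg (integral_nonneg fun _ ↦ exp_nonneg _)]
      exact hsection t x
  refine ⟨hint, fun t ↦ ?_⟩
  calc mgf (fun z : α × β ↦ X z.1 + Y z) (μ.prod ν) t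
      = ∫ x, ∫ y, exp (t * (X x + Y (x, y))) ∂ν ∂μ := integral_prod _ (hint t)
    _ ≤ ∫ x, exp (d * t ^ 2 / 2) * exp (t * X x) ∂μ :=
      integral_mono (hint t).integral_prod_left ((hX.integrable_exp_mul t).const_mul _)
        (hsection t)
    _ = exp (d * t ^ 2 / 2) * mgf X μ t := integral_const_mul _ _
    _ ≤ exp (d * t ^ 2 / 2) * exp (c * t ^ 2 / 2) := by gcongr; exact hX.mgf_le t
    _ = exp ((c + d : ℝ≥0) * t ^ 2 / 2) := by rw [← exp_add]; push_cast; ring_nf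

/-- The bounded differences property of McDiarmid's inequality: changing the `i`-th coordinate
changes `f` by at most `c i`. The absolute value is omitted, as the two points are
interchangeable. -/
def HasBoundedDifferences {ι : Type*} [DecidableEq ι] {Ω : ι → Type*} (f : (∀ i, Ω i) → ℝ)
    (c : ι → ℝ≥0) : Prop :=
  ∀ s i x, f (Function.update s i x) - f s ≤ c i

theorem HasBoundedDifferences.sub_le_sum {ι : Type*} [Fintype ι] [DecidableEq ι] {Ω : ι → Type*}
    {f : (∀ i, Ω i) → ℝ} {c : ι → ℝ≥0} (hf : HasBoundedDifferences f c) (s t : ∀ i, Ω i) :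
    f s - f t ≤ ∑ i, c i := by
  suffices ∀ A : Finset ι, f (A.piecewise s t) - f t ≤ ∑ i ∈ A, c i by simpa using this .univ
  intro A
  induction A using Finset.induction_on with
  | empty => simp
  | insert i A hi ih =>
    rw [Finset.piecewise_insert, Finset.sum_insert hi]
    push_cast at ih ⊢
    linarith [hf (A.piecewise s t) i (s i)]

theorem HasBoundedDifferences.integrable {ι : Type*} [Finite ι] [DecidableEq ι] {Ω : ι → Type*}
    [∀ i, MeasurableSpace (Ω i)] {f : (∀ i, Ω i) → ℝ} {c : ι → ℝ≥0}
    (hf : HasBoundedDifferences f c) (hfm : Measurable f) (μ : Measure (∀ i, Ω i))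
    [IsFiniteMeasure μ] : Integrable f μ := by
  have := Fintype.ofFinite ι
  rcases isEmpty_or_nonempty (∀ i, Ω i) with h | ⟨⟨t⟩⟩
  · simp [Measure.eq_zero_of_isEmpty μ]
  · refine .of_bound (C := |f t| + ∑ i, c i) hfm.aestronglyMeasurable (.of_forall fun s ↦ ?_)
    have hst := hf.sub_le_sum s t
    have hts := hf.sub_le_sum t s
    rw [norm_eq_abs, abs_le]
    constructor <;> linarith [neg_abs_le (f t), le_abs_self (f t)]

section FirstCoordinate

variable {n : ℕ} {Ω : Fin (n + 1) → Type*} {f : (∀ i, Ω i) → ℝ} {c : Fin (n + 1) → ℝ≥0}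

theorem HasBoundedDifferences.comp_finCons (hf : HasBoundedDifferences f c) (x : Ω 0) :
    HasBoundedDifferences (fun s : ∀ i : Fin n, Ω i.succ ↦ f (Fin.cons x s))
      (fun i ↦ c i.succ) := fun s i y ↦ by
  simpa only [Fin.cons_update] using hf (Fin.cons x s) i.succ y

variable [∀ i, MeasurableSpace (Ω i)]

theorem measurable_comp_finCons (hf : Measurable f) :
    Measurable fun z : Ω 0 × (∀ i : Fin n, Ω i.succ) ↦ f (Fin.cons z.1 z.2) :=
  hf.comp (measurePreserving_finCons (μ := fun _ ↦ 0)).measurable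

theorem HasBoundedDifferences.integral_cons_sub_integral_cons_le (hf : HasBoundedDifferences f c)
    (hfm : Measurable f) (ν : Measure (∀ i : Fin n, Ω i.succ)) [IsProbabilityMeasure ν]
    (x y : Ω 0) : ∫ s, f (Fin.cons x s) ∂ν - ∫ s, f (Fin.cons y s) ∂ν ≤ c 0 := by
  have hint : ∀ x, Integrable (fun s ↦ f (Fin.cons x s)) ν := fun x ↦
    (hf.comp_finCons x).integrable ((measurable_comp_finCons hfm).comp measurable_prodMk_left) ν
  have hxy : ∀ s, f (Fin.cons x s) - f (Fin.cons y s) ≤ c 0 := fun s ↦ by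
    simpa only [Fin.update_cons_zero] using hf (Fin.cons y s) 0 x
  rw [← integral_sub (hint x) (hint y)]
  simpa using integral_mono ((hint x).sub (hint y)) (integrable_const _) hxy

end FirstCoordinate

theorem HasBoundedDifferences.hasSubgaussianMGF {n : ℕ} {Ω : Fin n → Type*}
    [∀ i, MeasurableSpace (Ω i)] {f : (∀ i, Ω i) → ℝ} {c : Fin n → ℝ≥0}
    (hf : HasBoundedDifferences f c) (hfm : Measurable f) (μ : ∀ i, Measure (Ω i))
    [∀ i, IsProbabilityMeasure (μ i)] :
    HasSubgaussianMGF (fun s ↦ f s - ∫ s', f s' ∂Measure.pi μ) (∑ i, (c i / 2) ^ 2)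
      (Measure.pi μ) := by
  induction n with
  | zero =>
    have : ∀ s, f s - ∫ s', f s' ∂Measure.pi μ = 0 := fun s ↦ by
      rw [integral_unique]
      simp [Subsingleton.elim s default]
    simp [this]
  | succ n ih =>
    set g : Ω 0 → ℝ := fun x ↦ ∫ s, f (Fin.cons x s) ∂Measure.pi fun i : Fin n ↦ μ i.succ
    have hcons := measurable_comp_finCons hfm
    have hgm : Measurable g := hcons.stronglyMeasurable.integral_prod_right'.measurable
    have hsub := hasSubgaussianMGF_add_of_prod
      (Y := fun z : Ω 0 × (∀ i : Fin n, Ω i.succ) ↦ f (Fin.cons z.1 z.2) - g z.1)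
      (hasSubgaussianMGF_sub_integral_of_sub_le (μ := μ 0) hgm
        (hf.integral_cons_sub_integral_cons_le hfm _))
      (hcons.sub (hgm.comp measurable_fst)).aestronglyMeasurable
      (fun x ↦ ih (hf.comp_finCons x) (hcons.comp measurable_prodMk_left) fun i ↦ μ i.succ)
    have hf_int := hf.integrable hfm (Measure.pi μ)
    have hmean : ∫ s, f s ∂Measure.pi μ = ∫ x, g x ∂μ 0 := by
      rw [integral_pi_succ hf_int, integral_prod _ (integrable_comp_finCons hf_int)]
    rw [Fin.sum_univ_succ, hmean]
    refine hsub.congr_identDistrib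
      ⟨hsub.aemeasurable, (hfm.sub_const _).aemeasurable, ?_⟩
    rw [← (measurePreserving_finCons (μ := μ)).map_eq, Measure.map_map (hfm.sub_const _)
      (measurePreserving_finCons (μ := μ)).measurable]
    congr 1
    funext z
    simp

theorem HasBoundedDifferences.measureReal_ge_le {n : ℕ} {Ω : Fin n → Type*}
    [∀ i, MeasurableSpace (Ω i)] {f : (∀ i, Ω i) → ℝ} {c : Fin n → ℝ≥0}
    (hf : HasBoundedDifferences f c) (hfm : Measurable f) (μ : ∀ i, Measure (Ω i))
    [∀ i, IsProbabilityMeasure (μ i)] {ε : ℝ} (hε : 0 ≤ ε) :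
    (Measure.pi μ).real {s | ∫ s', f s' ∂Measure.pi μ + ε ≤ f s} ≤
      exp (-2 * ε ^ 2 / ∑ i, (c i : ℝ) ^ 2) := by
  convert (hf.hasSubgaussianMGF hfm μ).measure_ge_le hε using 2
  · congr 1 with s
    simp [le_sub_iff_add_le, add_comm]
  · push_cast
    simp only [div_pow, ← Finset.sum_div]
    rcases eq_or_ne (∑ i, (c i : ℝ) ^ 2) 0 with h | h
    · simp [h]
    · field_simp

end BoundedDifferences

section FiniteSuprema

variable {ι : Type*} [Finite ι]

theorem le_ciSup_of_finite (f : ι → ℝ) (i : ι) : f i ≤ ⨆ j, f j :=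
  le_ciSup (Set.finite_range f).bddAbove i

theorem integrable_iSup_of_finite [Nonempty ι] {Ω : Type*} [MeasurableSpace Ω] {μ : Measure Ω}
    {f : ι → Ω → ℝ} (hf : ∀ i, Integrable (f i) μ) : Integrable (fun ω ↦ ⨆ i, f i ω) μ := by
  have := Fintype.ofFinite ι
  refine (integrable_finsetSum .univ fun i _ ↦ (hf i).abs).mono'
    (AEMeasurable.iSup fun i ↦ (hf i).aemeasurable).aestronglyMeasurable (.of_forall fun ω ↦ ?_)
  obtain ⟨i, hi⟩ := exists_eq_ciSup_of_finite (f := fun i ↦ f i ω)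
  rw [← hi]
  exact Finset.single_le_sum (f := fun i ↦ |f i ω|) (fun _ _ ↦ abs_nonneg _) (Finset.mem_univ i)

theorem integrable_iSup_add_sum_pi [Nonempty ι] {κ : Type*} [Fintype κ] {Ω : κ → Type*}
    [∀ k, MeasurableSpace (Ω k)] {μ : ∀ k, Measure (Ω k)} [∀ k, IsProbabilityMeasure (μ k)]
    {U : ∀ k, ι → Ω k → ℝ} (hU : ∀ k i, Integrable (U k i) (μ k)) (a : ι → ℝ) :
    Integrable (fun s ↦ ⨆ i, (a i + ∑ k, U k i (s k))) (Measure.pi μ) :=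
  integrable_iSup_of_finite fun i ↦ (integrable_const _).add
    (integrable_finsetSum .univ fun k _ ↦ integrable_comp_eval (hU k i))

theorem integral_iSup_add_sum_le [Nonempty ι] {n : ℕ} {Ω₁ Ω₂ : Fin n → Type*}
    [∀ k, MeasurableSpace (Ω₁ k)] [∀ k, MeasurableSpace (Ω₂ k)] {μ₁ : ∀ k, Measure (Ω₁ k)}
    {μ₂ : ∀ k, Measure (Ω₂ k)} [∀ k, IsProbabilityMeasure (μ₁ k)]
    [∀ k, IsProbabilityMeasure (μ₂ k)] {U : ∀ k, ι → Ω₁ k → ℝ} {V : ∀ k, ι → Ω₂ k → ℝ}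
    (hU : ∀ k i, Integrable (U k i) (μ₁ k)) (hV : ∀ k i, Integrable (V k i) (μ₂ k))
    (hUV : ∀ k (a : ι → ℝ), ∫ ω, ⨆ i, (a i + U k i ω) ∂μ₁ k ≤ ∫ ω, ⨆ i, (a i + V k i ω) ∂μ₂ k)
    (a : ι → ℝ) :
    ∫ s, ⨆ i, (a i + ∑ k, U k i (s k)) ∂Measure.pi μ₁ ≤
      ∫ s, ⨆ i, (a i + ∑ k, V k i (s k)) ∂Measure.pi μ₂ := by
  induction n generalizing a with
  | zero => simp
  | succ n ih =>
    have hU_pi := integrable_iSup_add_sum_pi hU a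
    have hV_pi := integrable_iSup_add_sum_pi hV a
    have hU_prod := integrable_comp_finCons hU_pi
    have hV_prod := integrable_comp_finCons hV_pi
    rw [integral_pi_succ hU_pi, integral_pi_succ hV_pi]
    simp only [Fin.sum_univ_succ, Fin.cons_zero, Fin.cons_succ] at hU_prod hV_prod ⊢
    have hV_tail : ∀ i, Integrable (fun s : ∀ k : Fin n, Ω₂ k.succ ↦ ∑ k : Fin n, V k.succ i (s k))
        (Measure.pi fun k ↦ μ₂ k.succ) := fun i ↦ integrable_finsetSum .univ fun k _ ↦
      integrable_comp_eval (μ := fun k : Fin n ↦ μ₂ k.succ) (hV k.succ i)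
    have hUV_prod : Integrable (fun z : Ω₁ 0 × (∀ k : Fin n, Ω₂ k.succ) ↦
        ⨆ i, (a i + (U 0 i z.1 + ∑ k : Fin n, V k.succ i (z.2 k))))
        ((μ₁ 0).prod (Measure.pi fun k ↦ μ₂ k.succ)) :=
      integrable_iSup_of_finite fun i ↦ (integrable_const _).add (((hU 0 i).comp_fst _).add
        ((hV_tail i).comp_snd _))
    calc _ ≤ ∫ z : Ω₁ 0 × (∀ k : Fin n, Ω₂ k.succ),
            ⨆ i, (a i + (U 0 i z.1 + ∑ k : Fin n, V k.succ i (z.2 k)))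
            ∂(μ₁ 0).prod (Measure.pi fun k ↦ μ₂ k.succ) := by
          rw [integral_prod _ hU_prod, integral_prod _ hUV_prod]
          refine integral_mono hU_prod.integral_prod_left hUV_prod.integral_prod_left fun x ↦ ?_
          simp only [← add_assoc]
          exact ih (fun k ↦ hU k.succ) (fun k ↦ hV k.succ) (fun k ↦ hUV k.succ) _
      _ ≤ _ := by
          rw [integral_prod_symm _ hUV_prod, integral_prod_symm _ hV_prod]
          refine integral_mono hUV_prod.integral_prod_right hV_prod.integral_prod_right fun s ↦ ?_
          simp only [add_comm (U 0 _ _), add_comm (V 0 _ _), ← add_assoc]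
          exact hUV 0 _

end FiniteSuprema

section GaussianMoments

theorem integral_abs_gaussianReal : ∫ x : ℝ, |x| ∂gaussianReal 0 1 = √(2 / π) := by
  set f : ℝ → ℝ := fun y ↦ (√(2 * π))⁻¹ * (y * exp (-(1 / 2) * y ^ 2)) with hf
  have hdensity : ∀ x : ℝ, gaussianPDFReal 0 1 x • |x| = f |x| := fun x ↦ by
    simp only [gaussianPDFReal, f, NNReal.coe_one, mul_one, sub_zero, smul_eq_mul, sq_abs]
    ring_nf
  have hhalf : ∫ y in Set.Ioi (0 : ℝ), y * exp (-(1 / 2) * y ^ 2) = 1 := by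
    have := integral_rpow_mul_exp_neg_mul_rpow (p := 2) (q := 1) (b := 1 / 2) two_pos
      (by norm_num) (by norm_num)
    norm_num [rpow_neg_one] at this
    simpa using this
  simp only [integral_gaussianReal_eq_integral_smul one_ne_zero, hdensity]
  rw [integral_comp_abs, hf, integral_const_mul, hhalf, sqrt_div zero_le_two,
    sqrt_mul zero_le_two]
  field_simp
  norm_num

/-- The `p`-th Gaussian moment `τ_p = (E|g|^p)^{1/p}`, with `g` a standard Gaussian variable. -/
noncomputable def gaussianMoment (p : ℝ) : ℝ :=
  (∫ x : ℝ, |x| ^ p ∂gaussianReal 0 1) ^ (1 / p)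

theorem gaussianMoment_nonneg (p : ℝ) : 0 ≤ gaussianMoment p := by
  unfold gaussianMoment
  positivity

theorem eLpNorm_id_gaussianReal {p : ℝ} (hp : 0 < p) :
    eLpNorm id (.ofReal p) (gaussianReal 0 1) = .ofReal (gaussianMoment p) := by
  rw [(memLp_id_gaussianReal' _ ENNReal.ofReal_ne_top).eLpNorm_eq_integral_rpow_norm
    (ENNReal.ofReal_pos.2 hp).ne' ENNReal.ofReal_ne_top, ENNReal.toReal_ofReal hp.le]
  simp [gaussianMoment]

theorem one_le_gaussianMoment {p : ℝ} (hp : 2 ≤ p) : 1 ≤ gaussianMoment p := by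
  have hsq : ∫ x : ℝ, x ^ 2 ∂gaussianReal 0 1 = 1 := by
    rw [← variance_of_integral_eq_zero (X := fun x : ℝ ↦ x) (by fun_prop) integral_id_gaussianReal]
    exact variance_fun_id_gaussianReal
  have htwo : gaussianMoment 2 = 1 := by simp [gaussianMoment, hsq]
  have hmono := eLpNorm_le_eLpNorm_of_exponent_le (μ := gaussianReal 0 1)
    (ENNReal.ofReal_le_ofReal hp) aestronglyMeasurable_id
  rwa [eLpNorm_id_gaussianReal two_pos, eLpNorm_id_gaussianReal (two_pos.trans_le hp), htwo,
    ENNReal.ofReal_le_ofReal_iff (gaussianMoment_nonneg p)] at hmono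

section InnerProduct

variable {H : Type*} [NormedAddCommGroup H] [InnerProductSpace ℝ H] [FiniteDimensional ℝ H]
  [MeasurableSpace H] [BorelSpace H]

theorem map_inner_stdGaussian (a : H) :
    (stdGaussian H).map (fun g ↦ ⟪a, g⟫) = (gaussianReal 0 1).map fun x ↦ ‖a‖ * x := by
  rw [gaussianReal_map_const_mul]
  refine (IsGaussian.map_eq_gaussianReal (innerSL ℝ a)).trans ?_
  rw [integral_strongDual_stdGaussian, variance_dual_stdGaussian, innerSL_apply_norm]
  congr 1
  · simp
  · ext
    simp

theorem eLpNorm_inner_stdGaussian (a : H) (p : ℝ≥0∞) :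
    eLpNorm (fun g ↦ ⟪a, g⟫) p (stdGaussian H) = ‖a‖ₑ * eLpNorm id p (gaussianReal 0 1) := by
  rw [← Function.id_comp fun g ↦ ⟪a, g⟫, ← eLpNorm_map_measure (by fun_prop) (by fun_prop),
    map_inner_stdGaussian, eLpNorm_map_measure (by fun_prop) (by fun_prop)]
  simpa [Function.comp_def, Pi.smul_def] using eLpNorm_const_smul ‖a‖ id p (gaussianReal 0 1)

theorem integrable_inner_stdGaussian (a : H) : Integrable (fun g ↦ ⟪a, g⟫) (stdGaussian H) :=
  (innerSL ℝ a).integrable_comp IsGaussian.integrable_id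

theorem integral_abs_inner_stdGaussian (a : H) :
    ∫ g, |⟪a, g⟫| ∂stdGaussian H = ‖a‖ * √(2 / π) := by
  rw [← integral_map (μ := stdGaussian H) (f := fun x : ℝ ↦ |x|) (by fun_prop) (by fun_prop),
    map_inner_stdGaussian, integral_map (by fun_prop) (by fun_prop)]
  simp [abs_mul, integral_const_mul, integral_abs_gaussianReal]

end InnerProduct

variable {ι E : Type*} [Fintype ι] [NormedAddCommGroup E] [InnerProductSpace ℝ E]

theorem eLpNorm_sq {α F : Type*} [MeasurableSpace α] {μ : Measure α} [NormedAddCommGroup F]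
    (f : α → F) (p : ℝ≥0∞) :
    eLpNorm (fun x ↦ ‖f x‖ ^ 2) (p / 2) μ = eLpNorm f p μ ^ 2 := by
  have hp : p / 2 * 2 = p := ENNReal.div_mul_cancel two_ne_zero ENNReal.ofNat_ne_top
  simpa [hp] using eLpNorm_norm_rpow (p := p / 2) (μ := μ) f two_pos

theorem eLpNorm_sum_smul_stdGaussian_le_of_orthonormalBasis {κ : Type*} [Fintype κ]
    (b : OrthonormalBasis κ ℝ E) (v : ι → E) {p : ℝ≥0∞} (hp : 2 ≤ p) :
    eLpNorm (fun g : EuclideanSpace ℝ ι ↦ ∑ i, g i • v i) p (stdGaussian _) ^ 2 ≤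
      (∑ i, ‖v i‖ₑ ^ 2) * eLpNorm id p (gaussianReal 0 1) ^ 2 := by
  set a : κ → EuclideanSpace ℝ ι := fun k ↦ WithLp.toLp 2 fun i ↦ ⟪b k, v i⟫
  have hcoord : ∀ (g : EuclideanSpace ℝ ι) k, ⟪b k, ∑ i, g i • v i⟫ = ⟪a k, g⟫ := fun g k ↦ by
    simp [a, inner_sum, inner_smul_right, PiLp.inner_apply]
  have hpyth : ∀ g : EuclideanSpace ℝ ι, ‖∑ i, g i • v i‖ ^ 2 = ∑ k, ‖⟪a k, g⟫‖ ^ 2 := fun g ↦ by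
    simp only [← b.sum_sq_norm_inner_right, hcoord]
  have hnorm : ∑ k, ‖a k‖ₑ ^ 2 = ∑ i, ‖v i‖ₑ ^ 2 := by
    have : ∑ k, ‖a k‖ ^ 2 = ∑ i, ‖v i‖ ^ 2 := by
      simp only [EuclideanSpace.norm_sq_eq, a, ← b.sum_sq_norm_inner_right (v _)]
      exact Finset.sum_comm
    simpa [← ofReal_norm, ← ENNReal.ofReal_pow, ← ENNReal.ofReal_sum_of_nonneg, sq_nonneg] using
      congrArg ENNReal.ofReal this
  calc eLpNorm (fun g : EuclideanSpace ℝ ι ↦ ∑ i, g i • v i) p (stdGaussian _) ^ 2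
      = eLpNorm (∑ k, fun g ↦ ‖⟪a k, g⟫‖ ^ 2) (p / 2) (stdGaussian _) := by
        rw [← eLpNorm_sq]
        congr 1 with g
        rw [hpyth, Finset.sum_apply]
    _ ≤ ∑ k, eLpNorm (fun g ↦ ‖⟪a k, g⟫‖ ^ 2) (p / 2) (stdGaussian _) :=
      eLpNorm_sum_le (fun k _ ↦ by fun_prop)
        ((ENNReal.le_div_iff_mul_le (by simp) (by simp)).2 (by simpa using hp))
    _ = (∑ i, ‖v i‖ₑ ^ 2) * eLpNorm id p (gaussianReal 0 1) ^ 2 := by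
      simp only [eLpNorm_sq, eLpNorm_inner_stdGaussian, mul_pow, ← Finset.sum_mul, hnorm]

theorem eLpNorm_sum_smul_stdGaussian_le (v : ι → E) {p : ℝ≥0∞} (hp : 2 ≤ p) :
    eLpNorm (fun g : EuclideanSpace ℝ ι ↦ ∑ i, g i • v i) p (stdGaussian _) ≤
      .ofReal √(∑ i, ‖v i‖ ^ 2) * eLpNorm id p (gaussianReal 0 1) := by
  let F := Submodule.span ℝ (Set.range v)
  let w : ι → F := fun i ↦ ⟨v i, Submodule.subset_span ⟨i, rfl⟩⟩
  have : FiniteDimensional ℝ F := .span_of_finite ℝ (Set.finite_range v)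
  have hw : eLpNorm (fun g : EuclideanSpace ℝ ι ↦ ∑ i, g i • v i) p (stdGaussian _) =
      eLpNorm (fun g : EuclideanSpace ℝ ι ↦ ∑ i, g i • w i) p (stdGaussian _) :=
    eLpNorm_congr_norm_ae (.of_forall fun g ↦ by simp [w])
  have hsum : ENNReal.ofReal √(∑ i, ‖v i‖ ^ 2) ^ 2 = ∑ i, ‖w i‖ₑ ^ 2 := by
    rw [← ENNReal.ofReal_pow (sqrt_nonneg _), sq_sqrt (by positivity),
      ENNReal.ofReal_sum_of_nonneg fun i _ ↦ sq_nonneg _]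
    simp only [ENNReal.ofReal_pow (norm_nonneg _), ofReal_norm]
    rfl
  rw [← ENNReal.pow_le_pow_left_iff two_ne_zero, mul_pow, hsum, hw]
  exact eLpNorm_sum_smul_stdGaussian_le_of_orthonormalBasis (stdOrthonormalBasis ℝ F) w hp

end GaussianMoments

section Rademacher

/-- The Rademacher distribution, uniform on the signs `±1`. -/
noncomputable def rademacher : Measure ℝ :=
  (2⁻¹ : ℝ≥0∞) • (Measure.dirac 1 + Measure.dirac (-1))

instance : IsProbabilityMeasure rademacher :=
  ⟨by simp [rademacher, ENNReal.inv_two_add_inv_two]⟩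

theorem integrable_rademacher (f : ℝ → ℝ) : Integrable f rademacher :=
  ((integrable_dirac (by simp)).add_measure (integrable_dirac (by simp))).smul_measure (by simp)

theorem integral_rademacher (f : ℝ → ℝ) : ∫ σ, f σ ∂rademacher = (f 1 + f (-1)) / 2 := by
  rw [rademacher, integral_smul_measure,
    integral_add_measure (integrable_dirac (by simp)) (integrable_dirac (by simp))]
  simp [div_eq_inv_mul]

/-- The empirical Rademacher complexity `E_σ sup_i Σ_k σ_k f_i(k)` of a family of vectors `f_i`,
not normalised by the number of coordinates. -/
noncomputable def rademacherComplexity {ι κ : Type*} [Fintype κ] (f : ι → κ → ℝ) : ℝ :=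
  ∫ σ : κ → ℝ, ⨆ i, ∑ k, σ k * f i k ∂Measure.pi fun _ ↦ rademacher

variable {ι : Type*} [Finite ι]

section Contraction

variable {H : Type*} [NormedAddCommGroup H] [InnerProductSpace ℝ H] [FiniteDimensional ℝ H]
  [MeasurableSpace H] [BorelSpace H]

/-- The Gaussian complexity `E_g sup_i Σ_k ⟪h_i(k), g_k⟫` of a family of tuples of vectors, where
the `g_k` are independent standard Gaussian vectors; it is not normalised. -/
noncomputable def gaussianComplexity {ι κ : Type*} [Fintype κ] (h : ι → κ → H) : ℝ :=
  ∫ g : κ → H, ⨆ i, ∑ k, ⟪h i k, g k⟫ ∂Measure.pi fun _ ↦ stdGaussian H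

theorem integral_iSup_sub_inner_stdGaussian (a : ι → ℝ) (h : ι → H) :
    ∫ g, ⨆ i, (a i - ⟪h i, g⟫) ∂stdGaussian H = ∫ g, ⨆ i, (a i + ⟪h i, g⟫) ∂stdGaussian H := by
  conv_rhs => rw [← stdGaussian_map (LinearIsometryEquiv.neg ℝ (E := H))]
  rw [integral_map (by fun_prop) (Measurable.iSup fun i ↦ by fun_prop).aestronglyMeasurable]
  simp [sub_eq_add_neg]

variable [Nonempty ι]

theorem add_add_norm_sub_le_integral_iSup_add_inner (a : ι → ℝ) (h : ι → H) (i j : ι) :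
    (a i + a j + ‖h i - h j‖ * √(2 / π)) / 2 ≤
      ∫ g, ⨆ i, (a i + ⟪h i, g⟫) ∂stdGaussian H := by
  have hadd : Integrable (fun g ↦ ⨆ i, (a i + ⟪h i, g⟫)) (stdGaussian H) :=
    integrable_iSup_of_finite fun i ↦ (integrable_const _).add (integrable_inner_stdGaussian _)
  have hsub : Integrable (fun g ↦ ⨆ i, (a i - ⟪h i, g⟫)) (stdGaussian H) :=
    integrable_iSup_of_finite fun i ↦ (integrable_const _).sub (integrable_inner_stdGaussian _)
  have habs := (integrable_inner_stdGaussian (h i - h j)).abs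
  have hle : ∀ g, a i + a j + |⟪h i - h j, g⟫| ≤
      (⨆ i, (a i + ⟪h i, g⟫)) + ⨆ i, (a i - ⟪h i, g⟫) := fun g ↦ by
    have hi := le_ciSup_of_finite (fun i ↦ a i + ⟪h i, g⟫) i
    have hj := le_ciSup_of_finite (fun i ↦ a i + ⟪h i, g⟫) j
    have hi' := le_ciSup_of_finite (fun i ↦ a i - ⟪h i, g⟫) i
    have hj' := le_ciSup_of_finite (fun i ↦ a i - ⟪h i, g⟫) j
    rw [inner_sub_left]
    cases abs_cases (⟪h i, g⟫ - ⟪h j, g⟫) <;> linarith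
  have hint := integral_mono ((integrable_const _).add habs) (hadd.add hsub) hle
  simp only [Pi.add_apply] at hint
  rw [integral_add (integrable_const _) habs, integral_add hadd hsub,
    integral_iSup_sub_inner_stdGaussian, integral_abs_inner_stdGaussian] at hint
  simp only [integral_const, probReal_univ, one_smul] at hint
  linarith

theorem integral_iSup_add_rademacher_mul_le {l : ι → ℝ} {h : ι → H} {C : ℝ} (hC : 0 ≤ C)
    (hl : ∀ i j, |l i - l j| ≤ C * ‖h i - h j‖) (a : ι → ℝ) :
    ∫ σ, ⨆ i, (a i + σ * l i) ∂rademacher ≤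
      ∫ g, ⨆ i, (a i + C * √(π / 2) * ⟪h i, g⟫) ∂stdGaussian H := by
  obtain ⟨i, hi⟩ := exists_eq_ciSup_of_finite (f := fun i ↦ a i + 1 * l i)
  obtain ⟨j, hj⟩ := exists_eq_ciSup_of_finite (f := fun i ↦ a i + -1 * l i)
  have hscale : C * ‖h i - h j‖ =
      ‖(C * √(π / 2)) • h i - (C * √(π / 2)) • h j‖ * √(2 / π) := by
    have : √(π / 2) * √(2 / π) = 1 := by
      rw [← sqrt_mul (by positivity), sqrt_eq_one]
      field_simp
    rw [← smul_sub, norm_smul, norm_of_nonneg (by positivity)]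
    linear_combination -(C * ‖h i - h j‖) * this
  have hmain := add_add_norm_sub_le_integral_iSup_add_inner a (fun i ↦ (C * √(π / 2)) • h i) i j
  simp only [← hscale, real_inner_smul_left] at hmain
  rw [integral_rademacher, ← hi, ← hj]
  linarith [(le_abs_self _).trans (hl i j)]

theorem rademacherComplexity_le_mul_gaussianComplexity {n : ℕ} {l : ι → Fin n → ℝ}
    {h : ι → Fin n → H} {C : ℝ} (hC : 0 ≤ C)
    (hl : ∀ i j k, |l i k - l j k| ≤ C * ‖h i k - h j k‖) :
    rademacherComplexity l ≤ C * √(π / 2) * gaussianComplexity h := by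
  have := integral_iSup_add_sum_le (fun k i ↦ integrable_rademacher (fun σ ↦ σ * l i k))
    (fun k i ↦ (integrable_inner_stdGaussian (h i k)).const_mul (C * √(π / 2)))
    (fun k ↦ integral_iSup_add_rademacher_mul_le hC fun i j ↦ hl i j k) 0
  simpa only [Pi.zero_apply, zero_add, ← Finset.mul_sum,
    ← mul_iSup_of_nonneg (mul_nonneg hC (sqrt_nonneg (π / 2))), integral_const_mul,
    rademacherComplexity, gaussianComplexity] using this

end Contraction

section Symmetrization

variable [Nonempty ι] {Z : Type*} [MeasurableSpace Z] {P : Measure Z}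

theorem integrable_rademacher_mul {f : Z → ℝ} (hf : Integrable f P) :
    Integrable (fun z : Z × ℝ ↦ z.2 * f z.1) (P.prod rademacher) := by
  simpa only [mul_comm, id] using hf.mul_prod (integrable_rademacher id)

variable [IsProbabilityMeasure P]

theorem ciSup_add_integral_le {f : ι → Z → ℝ} (hf : ∀ i, Integrable (f i) P) (a : ι → ℝ) :
    ⨆ i, (a i + ∫ z, f i z ∂P) ≤ ∫ z, ⨆ i, (a i + f i z) ∂P := by
  refine ciSup_le fun i ↦ ?_
  have hi : Integrable (fun z ↦ a i + f i z) P := (integrable_const _).add (hf i)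
  calc a i + ∫ z, f i z ∂P = ∫ z, (a i + f i z) ∂P := by
        simp [integral_add (integrable_const (a i)) (hf i)]
    _ ≤ _ := integral_mono hi
        (integrable_iSup_of_finite fun i ↦ (integrable_const _).add (hf i))
        fun z ↦ le_ciSup_of_finite (fun i ↦ a i + f i z) i

theorem integral_iSup_add_integral_sub_le {f : ι → Z → ℝ} (hf : ∀ i, Integrable (f i) P)
    (a : ι → ℝ) :
    ∫ z, ⨆ i, (a i + ((∫ z', f i z' ∂P) - f i z)) ∂P ≤
      ∫ z, ⨆ i, (a i + 2 * (z.2 * f i z.1)) ∂P.prod rademacher := by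
  have hadd : Integrable (fun z ↦ ⨆ i, (a i + 2 * f i z)) P :=
    integrable_iSup_of_finite fun i ↦ (integrable_const _).add ((hf i).const_mul _)
  have hsub : Integrable (fun z ↦ ⨆ i, (a i - 2 * f i z)) P :=
    integrable_iSup_of_finite fun i ↦ (integrable_const _).sub ((hf i).const_mul _)
  have hmean : ⨆ i, (a i + 2 * ∫ z, f i z ∂P) ≤ ∫ z, ⨆ i, (a i + 2 * f i z) ∂P := by
    simpa only [integral_const_mul] using ciSup_add_integral_le (fun i ↦ (hf i).const_mul 2) a
  have hle : ∀ z, ⨆ i, (a i + ((∫ z', f i z' ∂P) - f i z)) ≤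
      ((⨆ i, (a i + 2 * ∫ z, f i z ∂P)) + ⨆ i, (a i - 2 * f i z)) / 2 := fun z ↦ ciSup_le fun i ↦ by
    linarith [le_ciSup_of_finite (fun i ↦ a i + 2 * ∫ z, f i z ∂P) i,
      le_ciSup_of_finite (fun i ↦ a i - 2 * f i z) i]
  calc _ ≤ ∫ z, ((⨆ i, (a i + 2 * ∫ z, f i z ∂P)) + ⨆ i, (a i - 2 * f i z)) / 2 ∂P :=
        integral_mono (integrable_iSup_of_finite fun i ↦ (integrable_const _).add
          ((integrable_const _).sub (hf i))) (((integrable_const _).add hsub).div_const _) hle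
    _ = ((⨆ i, (a i + 2 * ∫ z, f i z ∂P)) + ∫ z, ⨆ i, (a i - 2 * f i z) ∂P) / 2 := by
        simp [integral_div, integral_add (integrable_const _) hsub]
    _ ≤ ((∫ z, ⨆ i, (a i + 2 * f i z) ∂P) + ∫ z, ⨆ i, (a i - 2 * f i z) ∂P) / 2 := by gcongr
    _ = _ := by
        have hrademacher : Integrable (fun z : Z × ℝ ↦ ⨆ i, (a i + 2 * (z.2 * f i z.1)))
            (P.prod rademacher) := integrable_iSup_of_finite fun i ↦
          (integrable_const _).add ((integrable_rademacher_mul (hf i)).const_mul _)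
        rw [integral_prod _ hrademacher]
        simp [integral_rademacher, integral_div, integral_add hadd hsub, ← sub_eq_add_neg]

theorem integral_iSup_sum_integral_sub_le (n : ℕ) {f : ι → Z → ℝ} (hf : ∀ i, Integrable (f i) P) :
    ∫ S : Fin n → Z, ⨆ i, ∑ k, ((∫ z, f i z ∂P) - f i (S k)) ∂Measure.pi (fun _ ↦ P) ≤
      2 * ∫ S : Fin n → Z, rademacherComplexity (fun i k ↦ f i (S k)) ∂Measure.pi fun _ ↦ P := by
  have htensor := integral_iSup_add_sum_le (n := n) (μ₁ := fun _ ↦ P)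
    (μ₂ := fun _ ↦ P.prod rademacher) (fun _ i ↦ (integrable_const (∫ z, f i z ∂P)).sub (hf i))
    (fun _ i ↦ (integrable_rademacher_mul (hf i)).const_mul 2)
    (fun _ ↦ integral_iSup_add_integral_sub_le hf) 0
  have hsplit := measurePreserving_arrowProdEquivProdArrow Z ℝ (Fin n) (fun _ ↦ P)
    fun _ ↦ rademacher
  have hint : Integrable (fun s : (Fin n → Z) × (Fin n → ℝ) ↦ ⨆ i, ∑ k, s.2 k * f i (s.1 k))
      ((Measure.pi fun _ ↦ P).prod (Measure.pi fun _ ↦ rademacher)) := by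
    refine (hsplit.integrable_comp_emb (MeasurableEquiv.measurableEmbedding _)).1 ?_
    exact integrable_iSup_of_finite fun i ↦ integrable_finsetSum _ fun k _ ↦
      integrable_comp_eval (μ := fun _ ↦ P.prod rademacher) (integrable_rademacher_mul (hf i))
  simp only [Pi.zero_apply, zero_add, ← Finset.mul_sum, ← mul_iSup_of_nonneg zero_le_two,
    integral_const_mul] at htensor
  refine htensor.trans_eq ?_
  simp only [rademacherComplexity]
  rw [← integral_prod _ hint, ← hsplit.integral_comp']
  rfl

end Symmetrization

end Rademacher

section BlockNorm

variable {E : Type*} [NormedAddCommGroup E] {c : ℕ}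

theorem norm2q_nonneg (q : ℝ) (w : Fin c → E) : 0 ≤ norm2q q w := by
  unfold norm2q
  positivity

theorem enorm_norm2q_rpow {p : ℝ} (hp : 0 < p) (w : Fin c → E) :
    ‖norm2q p w‖ₑ ^ p = ∑ j, ‖w j‖ₑ ^ p := by
  rw [norm2q, Real.enorm_of_nonneg (by positivity),
    ← ENNReal.ofReal_rpow_of_nonneg (by positivity) (by positivity), ← ENNReal.rpow_mul,
    one_div_mul_cancel hp.ne', ENNReal.rpow_one,
    ENNReal.ofReal_sum_of_nonneg fun _ _ ↦ by positivity]
  simp only [← ENNReal.ofReal_rpow_of_nonneg (norm_nonneg _) hp.le, ofReal_norm]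

theorem eLpNorm_ofReal_eq_lintegral {Ω : Type*} [MeasurableSpace Ω] {μ : Measure Ω} {p : ℝ}
    (hp : 0 < p) (f : Ω → E) : eLpNorm f (.ofReal p) μ = (∫⁻ ω, ‖f ω‖ₑ ^ p ∂μ) ^ (1 / p) := by
  rw [eLpNorm_eq_lintegral_rpow_enorm_toReal (ENNReal.ofReal_pos.2 hp).ne' ENNReal.ofReal_ne_top,
    ENNReal.toReal_ofReal hp.le]

theorem sum_inner_le_norm2q_mul_norm2q [InnerProductSpace ℝ E] {p q : ℝ}
    (hpq : p.HolderConjugate q) (u v : Fin c → E) :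
    ∑ j, ⟪u j, v j⟫ ≤ norm2q p u * norm2q q v :=
  (Finset.sum_le_sum fun j _ ↦ real_inner_le_norm (u j) (v j)).trans
    (inner_le_Lp_mul_Lq_of_nonneg _ hpq (fun _ _ ↦ norm_nonneg _) fun _ _ ↦ norm_nonneg _)

variable {Ω : Type*} [MeasurableSpace Ω] {μ : Measure Ω} {X : Fin c → Ω → E} {p : ℝ}

theorem eLpNorm_norm2q_le {M : ℝ≥0∞} (hp : 0 < p) (hX : ∀ j, AEStronglyMeasurable (X j) μ)
    (hXM : ∀ j, eLpNorm (X j) (.ofReal p) μ ≤ M) :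
    eLpNorm (fun ω ↦ norm2q p fun j ↦ X j ω) (.ofReal p) μ ≤ (c : ℝ≥0∞) ^ (1 / p) * M := by
  have hX_le : ∀ j, ∫⁻ ω, ‖X j ω‖ₑ ^ p ∂μ ≤ M ^ p := fun j ↦ by
    rw [← ENNReal.rpow_inv_le_iff hp, ← one_div, ← eLpNorm_ofReal_eq_lintegral hp]
    exact hXM j
  calc eLpNorm (fun ω ↦ norm2q p fun j ↦ X j ω) (.ofReal p) μ
      = (∑ j, ∫⁻ ω, ‖X j ω‖ₑ ^ p ∂μ) ^ (1 / p) := by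
        rw [eLpNorm_ofReal_eq_lintegral hp,
          lintegral_congr fun ω ↦ enorm_norm2q_rpow hp fun j ↦ X j ω,
          lintegral_finsetSum' _ fun j _ ↦ (hX j).enorm.pow_const p]
    _ ≤ (∑ _j : Fin c, M ^ p) ^ (1 / p) := by
        gcongr with j
        exact hX_le j
    _ = (c : ℝ≥0∞) ^ (1 / p) * M := by
        rw [Finset.sum_const, Finset.card_univ, Fintype.card_fin, nsmul_eq_mul,
          ENNReal.mul_rpow_of_nonneg _ _ (by positivity), ← ENNReal.rpow_mul,
          mul_one_div_cancel hp.ne', ENNReal.rpow_one]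

theorem memLp_norm2q (hp : 0 < p) (hX : ∀ j, MemLp (X j) (.ofReal p) μ) :
    MemLp (fun ω ↦ norm2q p fun j ↦ X j ω) (.ofReal p) μ := by
  refine ⟨AEMeasurable.aestronglyMeasurable ?_, ?_⟩
  · exact (Finset.aemeasurable_fun_sum _ fun j _ ↦
      (hX j).1.norm.aemeasurable.pow_const p).pow_const (1 / p)
  · refine (eLpNorm_norm2q_le hp (fun j ↦ (hX j).1) (M := ∑ j, eLpNorm (X j) (.ofReal p) μ)
      fun j ↦ Finset.single_le_sum (f := fun j ↦ eLpNorm (X j) (.ofReal p) μ)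
        (fun _ _ ↦ zero_le) (Finset.mem_univ j)).trans_lt ?_
    exact ENNReal.mul_lt_top (ENNReal.rpow_lt_top_of_nonneg (by positivity) (by simp))
      (ENNReal.sum_lt_top.2 fun j _ ↦ (hX j).2)

theorem integral_norm2q_le [IsProbabilityMeasure μ] {M : ℝ} (hp : 1 ≤ p) (hM : 0 ≤ M)
    (hX : ∀ j, MemLp (X j) (.ofReal p) μ)
    (hXM : ∀ j, eLpNorm (X j) (.ofReal p) μ ≤ .ofReal M) :
    ∫ ω, norm2q p (fun j ↦ X j ω) ∂μ ≤ (c : ℝ) ^ (1 / p) * M := by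
  have hp₀ : 0 < p := one_pos.trans_le hp
  have hY := memLp_norm2q hp₀ hX
  have hnorm : ∫ ω, norm2q p (fun j ↦ X j ω) ∂μ = ∫ ω, ‖norm2q p (fun j ↦ X j ω)‖ ∂μ := by
    simp only [norm_of_nonneg (norm2q_nonneg _ _)]
  rw [hnorm, ← ENNReal.ofReal_le_ofReal_iff (by positivity), ENNReal.ofReal_mul (by positivity),
    ofReal_integral_norm_eq_lintegral_enorm (hY.integrable (by simpa using hp)),
    ← eLpNorm_one_eq_lintegral_enorm, ← ENNReal.ofReal_rpow_of_nonneg (by positivity)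
    (by positivity), ENNReal.ofReal_natCast]
  exact (eLpNorm_le_eLpNorm_of_exponent_le (by simpa using hp) hY.1).trans
    (eLpNorm_norm2q_le hp₀ (fun j ↦ (hX j).1) hXM)

end BlockNorm

section LinearGaussianComplexity

variable {E : Type*} [NormedAddCommGroup E] [InnerProductSpace ℝ E] {c : ℕ}

/-- The score vector `(⟪w_1, x⟫, …, ⟪w_c, x⟫)` of the linear hypothesis `w` at the feature `x`. -/
def scores (w : Fin c → E) (x : E) : EuclideanSpace ℝ (Fin c) :=
  WithLp.toLp 2 fun j ↦ ⟪w j, x⟫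

theorem measurePreserving_eval_stdGaussian {κ : Type*} [Fintype κ] (j : κ) :
    MeasurePreserving (fun g : EuclideanSpace ℝ κ ↦ g j) (stdGaussian _) (gaussianReal 0 1) := by
  refine ⟨by fun_prop, ?_⟩
  rw [← map_pi_eq_stdGaussian, Measure.map_map (by fun_prop) (by fun_prop)]
  exact (measurePreserving_eval (fun _ : κ ↦ gaussianReal 0 1) j).map_eq

theorem measurePreserving_column_stdGaussian {κ κ' : Type*} [Fintype κ] [Fintype κ'] (j : κ') :
    MeasurePreserving
      (fun g : κ → EuclideanSpace ℝ κ' ↦ (WithLp.toLp 2 fun k ↦ g k j : EuclideanSpace ℝ κ))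
      (Measure.pi fun _ ↦ stdGaussian _) (stdGaussian _) :=
  MeasurePreserving.comp ⟨by fun_prop, map_pi_eq_stdGaussian⟩
    (measurePreserving_pi (fun _ : κ ↦ stdGaussian (EuclideanSpace ℝ κ')) _
      fun _ ↦ measurePreserving_eval_stdGaussian j)

theorem sum_inner_scores_le {κ : Type*} [Fintype κ] {p q : ℝ} (hpq : q.HolderConjugate p)
    (w : Fin c → E) (x : κ → E) (g : κ → EuclideanSpace ℝ (Fin c)) :
    ∑ k, ⟪scores w (x k), g k⟫ ≤ norm2q q w * norm2q p fun j ↦ ∑ k, g k j • x k := by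
  refine Eq.trans_le ?_ (sum_inner_le_norm2q_mul_norm2q hpq _ _)
  simp only [scores, PiLp.inner_apply, inner_sum, real_inner_smul_right, RCLike.inner_apply,
    conj_trivial]
  exact Finset.sum_comm

theorem gaussianComplexity_scores_le {ι κ : Type*} [Finite ι] [Nonempty ι] [Fintype κ] {p q Λ : ℝ}
    (hpq : q.HolderConjugate p) (hp : 2 ≤ p) (hΛ : 0 ≤ Λ) {w : ι → Fin c → E}
    (hw : ∀ i, norm2q q (w i) ≤ Λ) (x : κ → E) :
    gaussianComplexity (fun i k ↦ scores (w i) (x k)) ≤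
      Λ * ((c : ℝ) ^ (1 / p) * (√(∑ k, ‖x k‖ ^ 2) * gaussianMoment p)) := by
  have hp₁ : 1 ≤ p := one_le_two.trans hp
  have hp₀ : 0 < p := one_pos.trans_le hp₁
  have hXM : ∀ j, eLpNorm (fun g : κ → EuclideanSpace ℝ (Fin c) ↦ ∑ k, g k j • x k) (.ofReal p)
      (Measure.pi fun _ ↦ stdGaussian _) ≤ .ofReal (√(∑ k, ‖x k‖ ^ 2) * gaussianMoment p) := by
    intro j
    have hcomp := eLpNorm_comp_measurePreserving (p := .ofReal p)
      (g := fun g : EuclideanSpace ℝ κ ↦ ∑ k, g k • x k)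
      (Continuous.aestronglyMeasurable (by fun_prop)) (measurePreserving_column_stdGaussian j)
    rw [ENNReal.ofReal_mul (sqrt_nonneg _), ← eLpNorm_id_gaussianReal hp₀]
    exact hcomp.trans_le
      (eLpNorm_sum_smul_stdGaussian_le x (by simpa using ENNReal.ofReal_le_ofReal hp))
  have hX : ∀ j, MemLp (fun g : κ → EuclideanSpace ℝ (Fin c) ↦ ∑ k, g k j • x k) (.ofReal p)
      (Measure.pi fun _ ↦ stdGaussian _) := fun j ↦
    ⟨Continuous.aestronglyMeasurable (by fun_prop), (hXM j).trans_lt ENNReal.ofReal_lt_top⟩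
  have hsup : Integrable (fun g : κ → EuclideanSpace ℝ (Fin c) ↦
      ⨆ i, ∑ k, ⟪scores (w i) (x k), g k⟫) (Measure.pi fun _ ↦ stdGaussian _) :=
    integrable_iSup_of_finite fun i ↦ integrable_finsetSum _ fun k _ ↦
      integrable_comp_eval (μ := fun _ ↦ stdGaussian (EuclideanSpace ℝ (Fin c)))
        (integrable_inner_stdGaussian _)
  refine (integral_mono hsup
    (((memLp_norm2q hp₀ hX).integrable (by simpa using hp₁)).const_mul Λ) fun g ↦ ciSup_le fun i ↦
      (sum_inner_scores_le hpq _ _ _).trans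
        (mul_le_mul_of_nonneg_right (hw i) (norm2q_nonneg _ _))).trans ?_
  rw [integral_const_mul]
  exact mul_le_mul_of_nonneg_left (integral_norm2q_le hp₁
    (mul_nonneg (sqrt_nonneg _) (gaussianMoment_nonneg p)) hX hXM) hΛ

end LinearGaussianComplexity

section UniformDeviation

section BoundedDifferences

variable {ι : Type*} [DecidableEq ι] {Ω : ι → Type*} {c d : ι → ℝ≥0} {f g : (∀ i, Ω i) → ℝ}

theorem hasBoundedDifferences_sum [Fintype ι] {g : ∀ i, Ω i → ℝ}
    (hg : ∀ i x y, g i x - g i y ≤ c i) : HasBoundedDifferences (fun s ↦ ∑ i, g i (s i)) c := by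
  intro s i x
  rw [← Finset.sum_sub_distrib, Finset.sum_eq_single_of_mem i (Finset.mem_univ i)]
  · simpa using hg i x (s i)
  · intro j _ hj
    simp [hj]

theorem HasBoundedDifferences.sub (hf : HasBoundedDifferences f c)
    (hg : HasBoundedDifferences g d) : HasBoundedDifferences (f - g) (c + d) := by
  intro s i x
  have h := hg (Function.update s i x) i (s i)
  simp only [Function.update_idem, Function.update_eq_self] at h
  simp only [Pi.sub_apply, Pi.add_apply, NNReal.coe_add]
  linarith [hf s i x]

theorem HasBoundedDifferences.const_smul (hf : HasBoundedDifferences f c) (a : ℝ≥0) :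
    HasBoundedDifferences (a • f) (a • c) := by
  intro s i x
  simpa [mul_sub, NNReal.smul_def] using mul_le_mul_of_nonneg_left (hf s i x) a.coe_nonneg

theorem HasBoundedDifferences.iSup {κ : Type*} [Finite κ] [Nonempty κ]
    {f : κ → (∀ i, Ω i) → ℝ} (hf : ∀ j, HasBoundedDifferences (f j) c) :
    HasBoundedDifferences (fun s ↦ ⨆ j, f j s) c := by
  intro s i x
  rw [sub_le_iff_le_add']
  exact ciSup_le fun j ↦ by linarith [hf j s i x, le_ciSup_of_finite (fun j ↦ f j s) j]

theorem HasBoundedDifferences.integral {Θ : Type*} [MeasurableSpace Θ] {ν : Measure Θ}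
    [IsProbabilityMeasure ν] {f : (∀ i, Ω i) → Θ → ℝ} (hint : ∀ s, Integrable (f s) ν)
    (hf : ∀ᵐ θ ∂ν, HasBoundedDifferences (fun s ↦ f s θ) c) :
    HasBoundedDifferences (fun s ↦ ∫ θ, f s θ ∂ν) c := by
  intro s i x
  rw [← integral_sub (hint _) (hint _)]
  simpa using integral_mono_ae ((hint _).sub (hint _)) (integrable_const (c i : ℝ))
    (hf.mono fun θ hθ ↦ hθ s i x)

end BoundedDifferences

variable {ι : Type*} [Finite ι] {Z : Type*} {n : ℕ} {f : ι → Z → ℝ} {B : ℝ≥0}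

theorem ae_rademacher : ∀ᵐ σ ∂rademacher, σ = 1 ∨ σ = -1 := by
  refine Measure.ae_smul_measure ?_ _
  rw [ae_add_measure_iff]
  simp [ae_dirac_eq]

theorem hasBoundedDifferences_rademacherComplexity [Nonempty ι] (h₀ : ∀ i z, 0 ≤ f i z)
    (h₁ : ∀ i z, f i z ≤ B) :
    HasBoundedDifferences (fun S : Fin n → Z ↦ rademacherComplexity fun i k ↦ f i (S k))
      fun _ ↦ B := by
  have hsign : ∀ᵐ σ ∂Measure.pi fun _ : Fin n ↦ rademacher, ∀ k, σ k = 1 ∨ σ k = -1 :=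
    ae_all_iff.2 fun k ↦
      (measurePreserving_eval (fun _ ↦ rademacher) k).quasiMeasurePreserving.ae ae_rademacher
  refine .integral (fun S ↦ ?_) (hsign.mono fun σ hσ ↦ .iSup fun i ↦
    hasBoundedDifferences_sum (g := fun k z ↦ σ k * f i z) fun k z z' ↦ ?_)
  · exact integrable_iSup_of_finite fun i ↦ integrable_finsetSum _ fun k _ ↦
      integrable_comp_eval (μ := fun _ ↦ rademacher) (integrable_rademacher (· * f i (S k)))
  · rcases hσ k with h | h <;> rw [h] <;> linarith [h₀ i z, h₀ i z', h₁ i z, h₁ i z']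

variable [MeasurableSpace Z]

theorem measurable_rademacherComplexity (hf : ∀ i, Measurable (f i)) :
    Measurable fun S : Fin n → Z ↦ rademacherComplexity fun i k ↦ f i (S k) := by
  have : Measurable fun s : (Fin n → Z) × (Fin n → ℝ) ↦ ⨆ i, ∑ k, s.2 k * f i (s.1 k) :=
    Measurable.iSup fun i ↦ by fun_prop
  exact this.stronglyMeasurable.integral_prod_right'.measurable

variable [Nonempty ι] {P : Measure Z} [IsProbabilityMeasure P]

theorem measureReal_rademacherComplexity_add_le (hf : ∀ i, Measurable (f i))
    (h₀ : ∀ i z, 0 ≤ f i z) (h₁ : ∀ i z, f i z ≤ B) {ε : ℝ} (hε : 0 ≤ ε) :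
    (Measure.pi fun _ : Fin n ↦ P).real {S | 2 * rademacherComplexity (fun i k ↦ f i (S k)) + ε ≤
      ⨆ i, ∑ k, ((∫ z, f i z ∂P) - f i (S k))} ≤ exp (-2 * ε ^ 2 / (n * (3 * B) ^ 2)) := by
  have hfi : ∀ i, Integrable (f i) P := fun i ↦
    .of_bound (hf i).aestronglyMeasurable B (.of_forall fun z ↦ by
      rw [norm_of_nonneg (h₀ i z)]; exact h₁ i z)
  set R : (Fin n → Z) → ℝ := fun S ↦ rademacherComplexity fun i k ↦ f i (S k)
  set D : (Fin n → Z) → ℝ := fun S ↦ ⨆ i, ∑ k, ((∫ z, f i z ∂P) - f i (S k))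
  have hRb : HasBoundedDifferences R fun _ ↦ B := hasBoundedDifferences_rademacherComplexity h₀ h₁
  have hDb : HasBoundedDifferences D fun _ ↦ B := .iSup fun i ↦
    hasBoundedDifferences_sum (g := fun _ z ↦ (∫ z, f i z ∂P) - f i z) fun _ z z' ↦ by
      linarith [h₀ i z, h₁ i z']
  have hRm : Measurable R := measurable_rademacherComplexity hf
  have hDm : Measurable D := Measurable.iSup fun i ↦ by fun_prop
  have hmean : ∫ S, (D - (2 : ℝ≥0) • R) S ∂Measure.pi (fun _ ↦ P) ≤ 0 := by
    have := integral_iSup_sum_integral_sub_le n hfi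
    simp only [Pi.sub_apply, Pi.smul_apply, NNReal.smul_def, smul_eq_mul, NNReal.coe_ofNat]
    rw [integral_sub (hDb.integrable hDm _) ((hRb.integrable hRm _).const_mul _),
      integral_const_mul]
    linarith
  refine le_trans (measureReal_mono fun S hS ↦ ?_) (((hDb.sub (hRb.const_smul 2)).measureReal_ge_le
    (hDm.sub (hRm.const_smul _)) (fun _ ↦ P) hε).trans_eq ?_)
  · simp only [Set.mem_ofPred_eq] at hS ⊢
    have : (D - (2 : ℝ≥0) • R) S = D S - 2 * R S := rfl
    linarith
  · simp only [Pi.add_apply, Pi.smul_apply, NNReal.coe_add, smul_eq_mul,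
      NNReal.coe_mul, NNReal.coe_ofNat, Finset.sum_const, Finset.card_univ, Fintype.card_fin,
      nsmul_eq_mul]
    ring_nf

theorem measure_exists_sum_add_lt_le {f : ℕ → Z → ℝ} (hf : ∀ i, Measurable (f i))
    (h₀ : ∀ i z, 0 ≤ f i z) (h₁ : ∀ i z, f i z ≤ B) {K : (Fin n → Z) → ℝ}
    (hK : ∀ m S, rademacherComplexity (fun (i : Fin (m + 1)) k ↦ f i (S k)) ≤ K S)
    {ε : ℝ} (hε : 0 ≤ ε) :
    (Measure.pi fun _ : Fin n ↦ P) {S | ∃ i, ∑ k, f i (S k) + 2 * K S + ε < n * ∫ z, f i z ∂P} ≤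
      .ofReal (exp (-2 * ε ^ 2 / (n * (3 * B) ^ 2))) := by
  rw [Set.ofPred_exists, measure_iUnion_eq_iSup_accumulate]
  refine iSup_le fun m ↦ (measure_mono fun S hS ↦ ?_).trans
    ((ENNReal.le_ofReal_iff_toReal_le (measure_ne_top _ _) (exp_nonneg _)).2
      (measureReal_rademacherComplexity_add_le (P := P) (f := fun i : Fin (m + 1) ↦ f i)
        (fun i ↦ hf i) (fun i ↦ h₀ i) (fun i ↦ h₁ i) hε))
  obtain ⟨i, hi, h⟩ := Set.mem_accumulate.1 hS
  have hsup := le_ciSup_of_finite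
    (fun i : Fin (m + 1) ↦ ∑ k : Fin n, ((∫ z, f i z ∂P) - f i (S k))) ⟨i, by lia⟩
  simp only [Finset.sum_sub_distrib, Finset.sum_const, Finset.card_univ, Fintype.card_fin,
    nsmul_eq_mul] at hsup
  simp only [Set.mem_ofPred_eq, Finset.sum_sub_distrib, Finset.sum_const, Finset.card_univ,
    Fintype.card_fin, nsmul_eq_mul] at h ⊢
  linarith [hK m S]

theorem measure_exists_mem_sum_add_lt_le_of_isSeparable {W : Type*} [PseudoMetricSpace W]
    {V : Set W} (hV : TopologicalSpace.IsSeparable V) {f : W → Z → ℝ}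
    (hfc : ∀ z, Continuous fun w ↦ f w z) (hfm : ∀ w, Measurable (f w))
    (h₀ : ∀ w ∈ V, ∀ z, 0 ≤ f w z) (h₁ : ∀ w ∈ V, ∀ z, f w z ≤ B) {K : (Fin n → Z) → ℝ}
    (hK : ∀ m (w : Fin (m + 1) → W), (∀ i, w i ∈ V) →
      ∀ S, rademacherComplexity (fun i k ↦ f (w i) (S k)) ≤ K S)
    {ε : ℝ} (hε : 0 ≤ ε) :
    (Measure.pi fun _ : Fin n ↦ P)
        {S | ∃ w ∈ V, ∑ k, f w (S k) + 2 * K S + ε < n * ∫ z, f w z ∂P} ≤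
      .ofReal (exp (-2 * ε ^ 2 / (n * (3 * B) ^ 2))) := by
  rcases V.eq_empty_or_nonempty with rfl | hne
  · simp
  obtain ⟨D, hDV, hDc, hVD⟩ := hV.exists_countable_dense_subset
  obtain ⟨d, rfl⟩ := hDc.exists_eq_range (closure_nonempty_iff.1 (hne.mono hVD))
  have hd : ∀ i, d i ∈ V := fun i ↦ hDV (Set.mem_range_self i)
  refine (measure_mono fun S hS ↦ ?_).trans (measure_exists_sum_add_lt_le (P := P)
    (fun i ↦ hfm (d i)) (fun i ↦ h₀ _ (hd i)) (fun i ↦ h₁ _ (hd i))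
    (fun m ↦ hK m (fun i ↦ d i) fun i ↦ hd i) hε)
  obtain ⟨w, hw, hlt⟩ := hS
  contrapose! hlt
  simp only [Set.mem_ofPred_eq, not_exists, not_lt] at hlt
  have hint : ContinuousOn (fun w ↦ ∫ z, f w z ∂P) V :=
    continuousOn_of_dominated (fun w _ ↦ (hfm w).aestronglyMeasurable)
      (fun w hw ↦ .of_forall fun z ↦ (norm_of_nonneg (h₀ w hw z)).trans_le (h₁ w hw z))
      (integrable_const _) (.of_forall fun z ↦ (hfc z).continuousOn)
  have hsum : Continuous fun w ↦ ∑ k, f w (S k) + 2 * K S + ε :=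
    ((continuous_finsetSum _ fun k _ ↦ hfc (S k)).add_const _).add_const _
  exact ContinuousWithinAt.closure_le (hVD hw) (((hint w hw).mono hDV).const_mul _)
    hsum.continuousWithinAt (Set.forall_mem_range.2 hlt)

end UniformDeviation

section Margin

theorem exists_abs_ciSup_sub_ciSup_le {ι : Type*} [Finite ι] [Nonempty ι] (f g : ι → ℝ) :
    ∃ i, |(⨆ i, f i) - ⨆ i, g i| ≤ |f i - g i| := by
  obtain ⟨i, hi⟩ := exists_eq_ciSup_of_finite (f := f)
  obtain ⟨j, hj⟩ := exists_eq_ciSup_of_finite (f := g)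
  have hij := le_ciSup_of_finite g i
  have hji := le_ciSup_of_finite f j
  rw [← hi] at hji ⊢
  rw [← hj] at hij ⊢
  rcases le_total (f i) (g j) with h | h
  · exact ⟨j, by rw [abs_of_nonpos, abs_of_nonpos] <;> linarith⟩
  · exact ⟨i, by rw [abs_of_nonneg, abs_of_nonneg] <;> linarith⟩

variable {X : Type*} {c : ℕ}

theorem abs_mcMargin_sub_mcMargin_le (hc : 2 ≤ c) (h h' : X → Fin c → ℝ) (x : X) (y : Fin c) :
    |mcMargin h x y - mcMargin h' x y| ≤ √2 * ‖WithLp.toLp 2 (h x) - WithLp.toLp 2 (h' x)‖ := by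
  have : Nontrivial (Fin c) := Fin.nontrivial_iff_two_le.2 hc
  have : Nonempty {y' : Fin c // y' ≠ y} := nonempty_subtype.2 (exists_ne y)
  obtain ⟨⟨y', hy'⟩, hsup⟩ := exists_abs_ciSup_sub_ciSup_le
    (fun y' : {y' : Fin c // y' ≠ y} ↦ h x y'.1) fun y' ↦ h' x y'.1
  set u := WithLp.toLp 2 (h x) - WithLp.toLp 2 (h' x)
  have hnorm : |u y| ^ 2 + |u y'| ^ 2 ≤ ‖u‖ ^ 2 := by
    rw [EuclideanSpace.norm_sq_eq, ← Finset.sum_pair (f := fun j ↦ |u j| ^ 2) hy'.symm]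
    exact Finset.sum_le_univ_sum_of_nonneg fun _ ↦ sq_nonneg _
  calc |mcMargin h x y - mcMargin h' x y| ≤ |u y| + |u y'| := by
        rw [mcMargin, mcMargin, sub_sub_sub_comm]
        exact (abs_sub _ _).trans (add_le_add_right hsup _)
    _ ≤ √(2 * ‖u‖ ^ 2) := le_sqrt_of_sq_le (by nlinarith [sq_nonneg (|u y| - |u y'|)])
    _ = √2 * ‖u‖ := by rw [sqrt_mul zero_le_two, sqrt_sq (norm_nonneg u)]

theorem measurable_mcMargin [MeasurableSpace X] {h : X → Fin c → ℝ}
    (hh : ∀ j, Measurable fun x ↦ h x j) :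
    Measurable fun z : X × Fin c ↦ mcMargin h z.1 z.2 :=
  measurable_from_prod_countable_left fun y ↦ (hh y).sub
    (Measurable.iSup fun y' : {y' : Fin c // y' ≠ y} ↦ hh y'.1)

variable {E : Type*} [NormedAddCommGroup E] [InnerProductSpace ℝ E]

/-- The margin-based loss `ℓ(ρ_{h^w}(x, y))` of the linear hypothesis `h^w` at the labelled point
`z = (x, y)`. -/
noncomputable def marginLoss (ℓ : ℝ → ℝ) (φ : X → E) (w : Fin c → E) (z : X × Fin c) : ℝ :=
  ℓ (mcMargin (fun x' j ↦ ⟪w j, φ x'⟫) z.1 z.2)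

variable {ℓ : ℝ → ℝ} {L : ℝ≥0} {φ : X → E}

theorem measurable_marginLoss [MeasurableSpace X] [MeasurableSpace E] [BorelSpace E]
    (hℓ : Measurable ℓ) (hφ : Measurable φ) (w : Fin c → E) : Measurable (marginLoss ℓ φ w) :=
  hℓ.comp <| measurable_mcMargin fun j ↦
    (continuous_const.inner continuous_id : Continuous fun x ↦ ⟪w j, x⟫).measurable.comp hφ

theorem measureReal_mcMargin_le_zero_le_integral_marginLoss [MeasurableSpace X]
    {P : Measure (X × Fin c)} [IsFiniteMeasure P] {w : Fin c → E} (h₀ : ∀ t, 0 ≤ ℓ t)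
    (h₁ : ∀ t ≤ 0, 1 ≤ ℓ t) (hint : Integrable (marginLoss ℓ φ w) P) :
    P.real {z | mcMargin (fun x' j ↦ ⟪w j, φ x'⟫) z.1 z.2 ≤ 0} ≤ ∫ z, marginLoss ℓ φ w z ∂P :=
  calc _ ≤ P.real {z | 1 ≤ marginLoss ℓ φ w z} := measureReal_mono fun _ hz ↦ h₁ _ hz
    _ ≤ _ := by
      simpa only [one_mul] using mul_meas_ge_le_integral_of_nonneg (f := marginLoss ℓ φ w)
        (.of_forall fun _ ↦ h₀ _) hint 1

theorem abs_marginLoss_sub_marginLoss_le (hc : 2 ≤ c) (hℓ : LipschitzWith L ℓ)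
    (w w' : Fin c → E) (z : X × Fin c) :
    |marginLoss ℓ φ w z - marginLoss ℓ φ w' z| ≤
      L * √2 * ‖scores w (φ z.1) - scores w' (φ z.1)‖ := by
  rw [mul_assoc]
  exact (hℓ.dist_le_mul _ _).trans
    (mul_le_mul_of_nonneg_left (abs_mcMargin_sub_mcMargin_le hc _ _ _ _) L.coe_nonneg)

theorem continuous_marginLoss (hc : 2 ≤ c) (hℓ : LipschitzWith L ℓ) (z : X × Fin c) :
    Continuous fun w ↦ marginLoss ℓ φ w z := by
  refine continuous_iff_continuousAt.2 fun w ↦ tendsto_iff_norm_sub_tendsto_zero.2 ?_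
  have hscores : Continuous fun v : Fin c → E ↦
      L * √2 * ‖scores v (φ z.1) - scores w (φ z.1)‖ := by
    unfold scores
    fun_prop
  refine squeeze_zero (fun _ ↦ norm_nonneg _)
    (fun v ↦ abs_marginLoss_sub_marginLoss_le hc hℓ v w z) ?_
  simpa using hscores.tendsto w

theorem rademacherComplexity_marginLoss_le {ι : Type*} [Finite ι] [Nonempty ι] {n : ℕ}
    (hc : 2 ≤ c) (hℓ : LipschitzWith L ℓ) {p q Λ : ℝ} (hpq : q.HolderConjugate p) (hp : 2 ≤ p)
    (hΛ : 0 ≤ Λ) {w : ι → Fin c → E} (hw : ∀ i, norm2q q (w i) ≤ Λ) (S : Fin n → X × Fin c) :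
    rademacherComplexity (fun i k ↦ marginLoss ℓ φ (w i) (S k)) ≤
      √π * L * (Λ * ((c : ℝ) ^ (1 / p) * (√(∑ k, ‖φ (S k).1‖ ^ 2) * gaussianMoment p))) := by
  have hconst : L * √2 * √(π / 2) = √π * L := by
    rw [mul_assoc, ← sqrt_mul zero_le_two, mul_div_cancel₀ _ two_ne_zero, mul_comm]
  have hcontr := rademacherComplexity_le_mul_gaussianComplexity (C := L * √2) (by positivity)
    fun i j k ↦ abs_marginLoss_sub_marginLoss_le (φ := φ) hc hℓ (w i) (w j) (S k)
  rw [hconst] at hcontr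
  exact hcontr.trans (mul_le_mul_of_nonneg_left (gaussianComplexity_scores_le hpq hp hΛ hw _)
    (by positivity))

end Margin

section PairwiseRelation

variable {Z : Type*} [MeasurableSpace Z] {P : Measure Z} [IsProbabilityMeasure P]
  {R : Z → Z → Prop}

theorem exists_mem_forall_lt_of_measure_pi_ne_zero (hR : ∀ z, ∀ᵐ z' ∂P, R z z') {n : ℕ}
    {D : Set (Fin n → Z)} (hD : MeasurableSet D) (hD₀ : (Measure.pi fun _ ↦ P) D ≠ 0) :
    ∃ S ∈ D, ∀ i j, i < j → R (S i) (S j) := by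
  induction n with
  | zero =>
    obtain ⟨S, hS⟩ := nonempty_of_measure_ne_zero hD₀
    exact ⟨S, hS, fun i ↦ i.elim0⟩
  | succ n ih =>
    have hcons := measurePreserving_finCons (μ := fun _ : Fin (n + 1) ↦ P)
    rw [← hcons.measure_preimage hD.nullMeasurableSet, Ne,
      Measure.measure_prod_null (hcons.measurable hD)] at hD₀
    obtain ⟨z, hz⟩ := (Filter.not_eventually.1 hD₀).exists
    have hae : ∀ᵐ t ∂Measure.pi fun _ : Fin n ↦ P, ∀ i, R z (t i) := ae_all_iff.2 fun i ↦
      (measurePreserving_eval (fun _ : Fin n ↦ P) i).quasiMeasurePreserving.ae (hR z)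
    set N := toMeasurable (Measure.pi fun _ : Fin n ↦ P) {t | ¬ ∀ i, R z (t i)}
    have hN : (Measure.pi fun _ : Fin n ↦ P) N = 0 := (measure_toMeasurable _).trans hae
    obtain ⟨t, ⟨htD, htN⟩, ht⟩ := ih
      ((measurable_prodMk_left (hcons.measurable hD)).diff (measurableSet_toMeasurable _ _))
      ((measure_sdiff_null hN).trans_ne hz)
    have hzt : ∀ i, R z (t i) := by
      by_contra h
      exact htN (subset_toMeasurable _ _ h)
    refine ⟨Fin.cons z t, htD, fun i j hij ↦ ?_⟩
    cases i using Fin.cases with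
    | zero =>
      cases j using Fin.cases with
      | zero => exact absurd hij (lt_irrefl _)
      | succ j => exact hzt j
    | succ i =>
      cases j using Fin.cases with
      | zero => exact absurd hij (Fin.not_lt_zero _)
      | succ j => exact ht i j (Fin.succ_lt_succ_iff.1 hij)

theorem measure_pi_le_measure_inter_pairwise (hsymm : ∀ z z', R z z' → R z' z)
    (hR : ∀ z, ∀ᵐ z' ∂P, R z z') {n : ℕ} {G : Set (Fin n → Z)} (hG : MeasurableSet G) :
    (Measure.pi fun _ ↦ P) G ≤
      (Measure.pi fun _ ↦ P) (G ∩ {S | Pairwise fun i j ↦ R (S i) (S j)}) := by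
  set U := toMeasurable (Measure.pi fun _ ↦ P) (G ∩ {S | Pairwise fun i j ↦ R (S i) (S j)})
    with hU
  have hdiff : (Measure.pi fun _ ↦ P) (G \ U) = 0 := by
    by_contra h
    obtain ⟨S, ⟨hSG, hSU⟩, hS⟩ := exists_mem_forall_lt_of_measure_pi_ne_zero hR
      (hG.diff (measurableSet_toMeasurable _ _)) h
    refine hSU (subset_toMeasurable _ _ ⟨hSG, fun i j hij ↦ ?_⟩)
    rcases hij.lt_or_gt with h | h
    exacts [hS i j h, hsymm _ _ (hS j i h)]
  rw [← measure_toMeasurable (G ∩ _), ← hU]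
  exact measure_mono_ae (ae_le_set.2 hdiff)

theorem one_sub_le_measure_compl_inter_pairwise (hsymm : ∀ z z', R z z' → R z' z)
    (hR : ∀ z, ∀ᵐ z' ∂P, R z z') {n : ℕ} {D : Set (Fin n → Z)} {a : ℝ≥0∞}
    (hD : (Measure.pi fun _ ↦ P) D ≤ a) :
    1 - a ≤ (Measure.pi fun _ ↦ P) (Dᶜ ∩ {S | Pairwise fun i j ↦ R (S i) (S j)}) :=
  have hmeas := measurableSet_toMeasurable (Measure.pi fun _ : Fin n ↦ P) D
  calc 1 - a ≤ 1 - (Measure.pi fun _ ↦ P) D := tsub_le_tsub_left hD 1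
    _ = (Measure.pi fun _ ↦ P) (toMeasurable (Measure.pi fun _ ↦ P) D)ᶜ := by
      rw [prob_compl_eq_one_sub hmeas, measure_toMeasurable]
    _ ≤ _ := measure_pi_le_measure_inter_pairwise hsymm hR hmeas.compl
    _ ≤ _ := measure_mono (Set.inter_subset_inter_left _
      (Set.compl_subset_compl.2 (subset_toMeasurable _ _)))

end PairwiseRelation

section EssentialSubspace

variable {Z E : Type*} [MeasurableSpace Z] [NormedAddCommGroup E] [InnerProductSpace ℝ E]
  [MeasurableSpace E] [BorelSpace E] {P : Measure Z} [IsFiniteMeasure P] {φ : Z → E}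

theorem countable_setOf_not_ae_inner_eq_zero {ι : Type*} {b : ι → E} (hb : Orthonormal ℝ b)
    (hφ : Measurable φ) : {i | ¬ ∀ᵐ z ∂P, ⟪b i, φ z⟫ = 0}.Countable := by
  set g : ι → Z → ℝ := fun i z ↦ ⟪b i, φ z⟫ ^ 2 / (1 + ‖φ z‖ ^ 2) with hg
  have hgm : ∀ i, Measurable (g i) := fun i ↦ by
    have : Measurable fun z ↦ ⟪b i, φ z⟫ :=
      (continuous_const.inner continuous_id : Continuous fun x ↦ ⟪b i, x⟫).measurable.comp hφ
    fun_prop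
  have hg₀ : ∀ i z, 0 ≤ g i z := fun i z ↦ by positivity
  have hg₁ : ∀ (s : Finset ι) z, ∑ i ∈ s, g i z ≤ 1 := fun s z ↦ by
    rw [← Finset.sum_div, div_le_one (by positivity)]
    have := hb.sum_inner_products_le (φ z) (s := s)
    simp only [norm_eq_abs, sq_abs] at this
    linarith
  have hgi : ∀ i, Integrable (g i) P := fun i ↦
    .of_bound (hgm i).aestronglyMeasurable 1 (.of_forall fun z ↦ by
      rw [norm_of_nonneg (hg₀ i z)]
      simpa using hg₁ {i} z)
  have hsum : Summable fun i ↦ ∫ z, g i z ∂P := by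
    refine summable_of_sum_le (c := P.real Set.univ) (fun i ↦ integral_nonneg (hg₀ i)) fun s ↦ ?_
    rw [← integral_finsetSum _ fun i _ ↦ hgi i]
    simpa using integral_mono (μ := P) (integrable_finsetSum s fun i _ ↦ hgi i)
      (integrable_const (1 : ℝ)) (hg₁ s)
  refine hsum.countable_support.mono fun i hi ↦ Function.mem_support.2 fun h ↦ hi ?_
  filter_upwards [(integral_eq_zero_iff_of_nonneg (hg₀ i) (hgi i)).1 h] with z hz
  have : 1 + ‖φ z‖ ^ 2 ≠ 0 := by positivity
  simpa [hg, this] using hz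

variable (P) in
theorem exists_isSeparable_submodule_forall_ae_inner_eq_zero [CompleteSpace E]
    (hφ : Measurable φ) :
    ∃ F : Submodule ℝ E, IsClosed (F : Set E) ∧ TopologicalSpace.IsSeparable (F : Set E) ∧
      ∀ v ∈ Fᗮ, ∀ᵐ z ∂P, ⟪v, φ z⟫ = 0 := by
  obtain ⟨s, b, -⟩ := exists_hilbertBasis ℝ E
  set I := {i | ¬ ∀ᵐ z ∂P, ⟪b i, φ z⟫ = 0}
  have hI : I.Countable := countable_setOf_not_ae_inner_eq_zero b.orthonormal hφ
  refine ⟨(Submodule.span ℝ (b '' I)).topologicalClosure,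
    Submodule.isClosed_topologicalClosure _, ?_, fun v hv ↦ ?_⟩
  · rw [Submodule.topologicalClosure_coe]
    exact (hI.image b).isSeparable.span.closure
  have hvI : ∀ i ∈ I, ⟪v, b i⟫ = 0 := fun i hi ↦ (Submodule.mem_orthogonal' _ _).1 hv _
    (Submodule.le_topologicalClosure _ (Submodule.subset_span ⟨i, hi, rfl⟩))
  set J := Function.support fun i ↦ ⟪v, b i⟫ * ⟪b i, v⟫
  have hJ : J.Countable := (b.summable_inner_mul_inner v v).countable_support
  have hae : ∀ᵐ z ∂P, ∀ i ∈ J, ⟪b i, φ z⟫ = 0 := (ae_ball_iff hJ).2 fun i hi ↦ by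
    by_contra h
    exact hi (by simp [hvI i h])
  filter_upwards [hae] with z hz
  rw [← b.tsum_inner_mul_inner]
  refine (tsum_congr fun i ↦ ?_).trans tsum_zero
  by_cases h : ⟪v, b i⟫ = 0
  · rw [h, zero_mul]
  · rw [hz i (by exact mul_ne_zero h (by rwa [real_inner_comm])), mul_zero]

end EssentialSubspace

section OrthogonalFeatures

variable {E : Type*} [NormedAddCommGroup E] {c : ℕ}

theorem norm2q_mono {q : ℝ} (hq : 0 ≤ q) {w w' : Fin c → E} (h : ∀ j, ‖w j‖ ≤ ‖w' j‖) :
    norm2q q w ≤ norm2q q w' := by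
  unfold norm2q
  gcongr with j
  exact h j

theorem norm2q_zero {q : ℝ} (hq : 0 < q) : norm2q q (0 : Fin c → E) = 0 := by
  simp [norm2q, zero_rpow hq.ne', hq.ne']

theorem sqrt_sum_norm_sq_le_norm2q {q : ℝ} (hq₀ : 0 < q) (hq₂ : q ≤ 2) (w : Fin c → E) :
    √(∑ j, ‖w j‖ ^ 2) ≤ norm2q q w := by
  have hsum : 0 ≤ ∑ j, ‖w j‖ ^ q := by positivity
  have hpow : ∑ j, ‖w j‖ ^ q = norm2q q w ^ q := by
    rw [norm2q, ← rpow_mul hsum, one_div_mul_cancel hq₀.ne', rpow_one]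
  have hle : ∀ j, ‖w j‖ ≤ norm2q q w := fun j ↦ by
    rw [← rpow_le_rpow_iff (norm_nonneg _) (norm2q_nonneg q w) hq₀, ← hpow]
    exact Finset.single_le_sum (f := fun j ↦ ‖w j‖ ^ q) (fun _ _ ↦ by positivity)
      (Finset.mem_univ j)
  have hsplit : ∀ x : ℝ, 0 ≤ x → x ^ 2 = x ^ q * x ^ (2 - q) := fun x hx ↦ by
    rw [← rpow_add_of_nonneg hx hq₀.le (sub_nonneg.2 hq₂), add_sub_cancel, rpow_two]
  refine sqrt_le_iff.2 ⟨norm2q_nonneg q w, ?_⟩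
  calc ∑ j, ‖w j‖ ^ 2 = ∑ j, ‖w j‖ ^ q * ‖w j‖ ^ (2 - q) :=
        Finset.sum_congr rfl fun j _ ↦ hsplit _ (norm_nonneg _)
    _ ≤ ∑ j, ‖w j‖ ^ q * norm2q q w ^ (2 - q) := by
        gcongr with j
        exact hle j
    _ = norm2q q w ^ 2 := by rw [← Finset.sum_mul, hpow, ← hsplit _ (norm2q_nonneg q w)]

variable [InnerProductSpace ℝ E] {ι : Type*} [Fintype ι]

theorem sum_inner_normalize_sq_le {a : ι → E} (ha : Pairwise fun i j ↦ ⟪a i, a j⟫ = 0) (v : E) :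
    ∑ i, ⟪v, NormedSpace.normalize (a i)⟫ ^ 2 ≤ ‖v‖ ^ 2 := by
  classical
  have hortho : Orthonormal ℝ fun i : {i // a i ≠ 0} ↦ NormedSpace.normalize (a i) :=
    ⟨fun i ↦ NormedSpace.norm_normalize_eq_one_iff.2 i.2, fun i j hij ↦ by
      simp only [NormedSpace.normalize, real_inner_smul_left, real_inner_smul_right,
        ha (Subtype.coe_ne_coe.2 hij), mul_zero]⟩
  have hsum : ∑ i : {i // a i ≠ 0}, ⟪v, NormedSpace.normalize (a i)⟫ ^ 2 =
      ∑ i, ⟪v, NormedSpace.normalize (a i)⟫ ^ 2 := by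
    rw [← Finset.sum_subtype {i | a i ≠ 0} (by simp) fun i ↦ ⟪v, NormedSpace.normalize (a i)⟫ ^ 2]
    exact Finset.sum_filter_of_ne fun i _ h h₀ ↦ h (by simp [h₀])
  have hbessel := hortho.sum_inner_products_le v (s := Finset.univ)
  simp only [real_inner_comm v, norm_eq_abs, sq_abs] at hbessel
  exact hsum.ge.trans hbessel

theorem norm_scores_sq (w : Fin c → E) (x : E) : ‖scores w x‖ ^ 2 = ∑ j, ⟪w j, x⟫ ^ 2 := by
  simp only [scores, EuclideanSpace.norm_sq_eq, norm_eq_abs, sq_abs]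

theorem scores_smul (w : Fin c → E) (r : ℝ) (x : E) : scores w (r • x) = r • scores w x := by
  ext j
  simp [scores, real_inner_smul_right]

theorem sum_norm_scores_le_of_pairwise_inner_eq_zero {a : ι → E}
    (ha : Pairwise fun i j ↦ ⟪a i, a j⟫ = 0) (w : Fin c → E) :
    ∑ i, ‖scores w (a i)‖ ≤ √(∑ i, ‖a i‖ ^ 2) * √(∑ j, ‖w j‖ ^ 2) :=
  calc ∑ i, ‖scores w (a i)‖ = ∑ i, ‖a i‖ * ‖scores w (NormedSpace.normalize (a i))‖ :=
        Finset.sum_congr rfl fun i _ ↦ by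
          conv_lhs => rw [← NormedSpace.norm_smul_normalize (a i), scores_smul, norm_smul,
            norm_norm]
    _ ≤ √(∑ i, ‖a i‖ ^ 2) * √(∑ i, ‖scores w (NormedSpace.normalize (a i))‖ ^ 2) :=
        sum_mul_le_sqrt_mul_sqrt _ _ _
    _ ≤ √(∑ i, ‖a i‖ ^ 2) * √(∑ j, ‖w j‖ ^ 2) := by
        simp only [norm_scores_sq]
        rw [Finset.sum_comm]
        gcongr with j
        exact sum_inner_normalize_sq_le ha (w j)

variable (F : Submodule ℝ E) [F.HasOrthogonalProjection]

theorem scores_sub_scores_starProjection (w : Fin c → E) (x : E) :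
    scores w x - scores (fun j ↦ F.starProjection (w j)) x =
      scores (fun j ↦ Fᗮ.starProjection (w j)) (Fᗮ.starProjection x) := by
  ext j
  simp only [scores, PiLp.sub_apply]
  rw [← inner_sub_left, ← Submodule.starProjection_orthogonal_val,
    ← Submodule.inner_starProjection_left_eq_right,
    Submodule.starProjection_eq_self_iff.2 (Submodule.starProjection_apply_mem _ _)]

variable {F} {X : Type*} {φ : X → E} {ℓ : ℝ → ℝ} {L : ℝ≥0}

theorem integral_marginLoss_starProjection [MeasurableSpace X] {P : Measure (X × Fin c)}
    (hc : 2 ≤ c) (hℓ : LipschitzWith L ℓ) (hF : ∀ v ∈ Fᗮ, ∀ᵐ z ∂P, ⟪v, φ z.1⟫ = 0)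
    (w : Fin c → E) :
    ∫ z, marginLoss ℓ φ (fun j ↦ F.starProjection (w j)) z ∂P = ∫ z, marginLoss ℓ φ w z ∂P := by
  refine integral_congr_ae ?_
  have hres : ∀ᵐ z ∂P, ∀ j, ⟪w j - F.starProjection (w j), φ z.1⟫ = 0 :=
    ae_all_iff.2 fun j ↦ hF _ (Submodule.sub_starProjection_mem_orthogonal _)
  filter_upwards [hres] with z hz
  have hscores : scores (fun j ↦ F.starProjection (w j)) (φ z.1) = scores w (φ z.1) := by
    ext j
    exact (sub_eq_zero.1 ((inner_sub_left _ _ _).symm.trans (hz j))).symm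
  have hdiff := abs_marginLoss_sub_marginLoss_le (φ := φ) hc hℓ
    (fun j ↦ F.starProjection (w j)) w z
  rw [hscores, sub_self, norm_zero, mul_zero] at hdiff
  exact sub_eq_zero.1 (abs_nonpos_iff.1 hdiff)

theorem sum_marginLoss_starProjection_le {q : ℝ} (hc : 2 ≤ c) (hℓ : LipschitzWith L ℓ)
    (hq₀ : 0 < q) (hq₂ : q ≤ 2) {S : ι → X × Fin c}
    (hS : Pairwise fun i j ↦
      ⟪Fᗮ.starProjection (φ (S i).1), Fᗮ.starProjection (φ (S j).1)⟫ = 0)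
    (w : Fin c → E) :
    ∑ i, marginLoss ℓ φ (fun j ↦ F.starProjection (w j)) (S i) ≤
      ∑ i, marginLoss ℓ φ w (S i) + L * √2 * (√(∑ i, ‖φ (S i).1‖ ^ 2) * norm2q q w) := by
  have hloss : ∀ i, marginLoss ℓ φ (fun j ↦ F.starProjection (w j)) (S i) ≤ marginLoss ℓ φ w (S i) +
      L * √2 *
        ‖scores (fun j ↦ Fᗮ.starProjection (w j)) (Fᗮ.starProjection (φ (S i).1))‖ := fun i ↦ by
    rw [← scores_sub_scores_starProjection, norm_sub_rev]
    exact sub_le_iff_le_add'.1 ((le_abs_self _).trans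
      (abs_marginLoss_sub_marginLoss_le hc hℓ _ _ _))
  refine (Finset.sum_le_sum fun i _ ↦ hloss i).trans ?_
  rw [Finset.sum_add_distrib, ← Finset.mul_sum]
  gcongr
  refine (sum_norm_scores_le_of_pairwise_inner_eq_zero hS _).trans ?_
  gcongr with i
  · exact Submodule.norm_starProjection_apply_le _ _
  · exact (sqrt_sum_norm_sq_le_norm2q hq₀ hq₂ _).trans
      (norm2q_mono hq₀.le fun j ↦ Submodule.norm_starProjection_apply_le _ _)

end OrthogonalFeatures

section GeneralizationBound

variable {X E : Type*} [NormedAddCommGroup E] [InnerProductSpace ℝ E] {φ : X → E}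
  {n c : ℕ} {p q Λ : ℝ} {ℓ : ℝ → ℝ} {L : ℝ≥0}

theorem two_mul_sqrt_pi_add_sqrt_two_le (hc : 1 ≤ c) (hp : 2 ≤ p) (hΛ : 0 ≤ Λ) (K : ℝ) :
    2 * (√π * L * (Λ * ((c : ℝ) ^ (1 / p) * (√K * gaussianMoment p)))) + L * √2 * (√K * Λ) ≤
      4 * L * Λ * (c : ℝ) ^ (1 / p) * gaussianMoment p * √(π * p / 2 * K) := by
  have hT : 1 ≤ (c : ℝ) ^ (1 / p) * gaussianMoment p :=
    one_le_mul_of_one_le_of_one_le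
      (one_le_rpow (mod_cast hc) (by positivity)) (one_le_gaussianMoment hp)
  set T := (c : ℝ) ^ (1 / p) * gaussianMoment p
  have hπ : √π * √K ≤ √(π * p / 2 * K) := by
    rw [sqrt_mul (by positivity)]
    gcongr
    nlinarith [pi_pos]
  have h₂ : √2 * √K ≤ T * (√π * √K) := by
    refine le_trans ?_ (le_mul_of_one_le_left (by positivity) hT)
    gcongr
    exact two_le_pi
  calc _ = L * Λ * (2 * (T * (√π * √K)) + √2 * √K) := by ring
    _ ≤ L * Λ * (4 * (T * √(π * p / 2 * K))) := by
        gcongr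
        linarith [mul_le_mul_of_nonneg_left hπ (zero_le_one.trans hT),
          mul_nonneg (zero_le_one.trans hT) (by positivity : 0 ≤ √π * √K)]
    _ = _ := by ring

theorem isSeparable_setOf_forall_mem_and_norm2q_le {F : Submodule ℝ E}
    (hF : TopologicalSpace.IsSeparable (F : Set E)) :
    TopologicalSpace.IsSeparable {w : Fin c → E | (∀ j, w j ∈ F) ∧ norm2q q w ≤ Λ} :=
  (TopologicalSpace.IsSeparable.univ_pi fun _ : Fin c ↦ hF).mono fun _ hw j _ ↦ hw.1 j

theorem exp_neg_two_mul_sq_div_eq {a δ : ℝ} (hn : n ≠ 0) (ha : a ≠ 0) (hδ₀ : 0 < δ)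
    (hδ₂ : δ ≤ 2) :
    exp (-2 * (n * (a * √(log (2 / δ) / (2 * n)))) ^ 2 / (n * a ^ 2)) = δ / 2 := by
  have hlog : 0 ≤ log (2 / δ) := log_nonneg ((one_le_div hδ₀).2 hδ₂)
  have hexp : -2 * (n * (a * √(log (2 / δ) / (2 * n)))) ^ 2 / (n * a ^ 2) = -log (2 / δ) := by
    rw [mul_pow, mul_pow, sq_sqrt (by positivity)]
    field_simp
  rw [hexp, ← log_inv, inv_div, exp_log (by positivity)]

theorem mcMargin_zero (x : X) (y : Fin c) :
    mcMargin (fun x' j ↦ ⟪(0 : Fin c → E) j, φ x'⟫) x y = 0 := by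
  simp [mcMargin]

variable [MeasurableSpace X] [MeasurableSpace E] [BorelSpace E]
  {P : Measure (X × Fin c)} [IsProbabilityMeasure P]

theorem integrable_marginLoss (hφ : Measurable φ) (hℓ : Measurable ℓ) (h₀ : ∀ t, 0 ≤ ℓ t) {B : ℝ}
    {w : Fin c → E} (hB : ∀ z, marginLoss ℓ φ w z ≤ B) : Integrable (marginLoss ℓ φ w) P :=
  .of_bound (measurable_marginLoss hℓ hφ w).aestronglyMeasurable B
    (.of_forall fun z ↦ (norm_of_nonneg (h₀ _)).trans_le (hB z))

theorem one_sub_exp_le_measure_forall_integral_marginLoss_le [CompleteSpace E] (hc : 2 ≤ c)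
    (hφ : Measurable φ) (hpq : q.HolderConjugate p) (hp : 2 ≤ p) (hΛ : 0 ≤ Λ)
    (hℓ : LipschitzWith L ℓ) (h₀ : ∀ t, 0 ≤ ℓ t) {B : ℝ≥0}
    (hB : ∀ w : Fin c → E, norm2q q w ≤ Λ → ∀ z, marginLoss ℓ φ w z ≤ B) {ε : ℝ} (hε : 0 ≤ ε) :
    1 - .ofReal (exp (-2 * ε ^ 2 / (n * (3 * B) ^ 2))) ≤ (Measure.pi fun _ : Fin n ↦ P)
      {S | ∀ w, norm2q q w ≤ Λ → n * ∫ z, marginLoss ℓ φ w z ∂P ≤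
        ∑ k, marginLoss ℓ φ w (S k) +
          4 * L * Λ * (c : ℝ) ^ (1 / p) * gaussianMoment p *
            √(π * p / 2 * ∑ k, ‖φ (S k).1‖ ^ 2) + ε} := by
  obtain ⟨F, hFc, hFs, hF⟩ := exists_isSeparable_submodule_forall_ae_inner_eq_zero P
    (hφ.comp measurable_fst)
  have : CompleteSpace F := hFc.completeSpace_coe
  have hortho : ∀ z : X × Fin c, ∀ᵐ z' ∂P,
      ⟪Fᗮ.starProjection (φ z.1), Fᗮ.starProjection (φ z'.1)⟫ = 0 := fun z ↦ by
    filter_upwards [hF _ (Submodule.starProjection_apply_mem Fᗮ (φ z.1))] with z' hz'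
    rwa [← Submodule.inner_starProjection_left_eq_right,
      Submodule.starProjection_eq_self_iff.2 (Submodule.starProjection_apply_mem _ _)]
  have hdev := measure_exists_mem_sum_add_lt_le_of_isSeparable (n := n) (P := P)
    (isSeparable_setOf_forall_mem_and_norm2q_le (c := c) (q := q) (Λ := Λ) hFs)
    (continuous_marginLoss hc hℓ) (measurable_marginLoss hℓ.continuous.measurable hφ)
    (fun _ _ _ ↦ h₀ _) (fun w hw ↦ hB w hw.2)
    (fun m w hw ↦ rademacherComplexity_marginLoss_le hc hℓ hpq hp hΛ fun i ↦ (hw i).2) hε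
  refine (one_sub_le_measure_compl_inter_pairwise
    (fun z z' h ↦ (real_inner_comm _ _).trans h) hortho hdev).trans (measure_mono ?_)
  rintro S ⟨hgood, hpair⟩ w hw
  have hq₂ : q ≤ 2 := by nlinarith [hpq.sub_one_mul_conj, hpq.sub_one_pos]
  have hproj : norm2q q (fun j ↦ F.starProjection (w j)) ≤ Λ :=
    (norm2q_mono hpq.nonneg fun j ↦ F.norm_starProjection_apply_le (w j)).trans hw
  have hrisk := not_lt.1 fun h ↦
    hgood ⟨_, ⟨fun j ↦ F.starProjection_apply_mem (w j), hproj⟩, h⟩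
  rw [integral_marginLoss_starProjection hc hℓ hF] at hrisk
  have hemp := sum_marginLoss_starProjection_le hc hℓ hpq.pos hq₂ hpair w
  have hnum := two_mul_sqrt_pi_add_sqrt_two_le (L := L) (one_le_two.trans hc) hp hΛ
    (∑ k, ‖φ (S k).1‖ ^ 2)
  have hmono : L * √2 * (√(∑ k, ‖φ (S k).1‖ ^ 2) * norm2q q w) ≤
      L * √2 * (√(∑ k, ‖φ (S k).1‖ ^ 2) * Λ) := by gcongr
  linarith

end GeneralizationBound

theorem lq_norm_multiclass_generalization_bound_general
    {X E : Type*} [MeasurableSpace X] [NormedAddCommGroup E] [InnerProductSpace ℝ E]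
    [CompleteSpace E] [MeasurableSpace E] [BorelSpace E]
    (n c : ℕ) (hn : 1 ≤ n) (hc : 2 ≤ c)
    (P : Measure (X × Fin c)) [IsProbabilityMeasure P]
    (φ : X → E) (hφ : Measurable φ)
    (q : ℝ) (hq₁ : 1 < q) (hq₂ : q ≤ 2) (Λ : ℝ) (hΛ : 0 < Λ)
    (ℓ : ℝ → ℝ) (L : ℝ)
    (hℓ₁ : ∀ t ≤ (0 : ℝ), 1 ≤ ℓ t) (hℓ₀ : ∀ t, 0 ≤ ℓ t)
    (hℓLip : ∀ t₁ t₂, |ℓ t₁ - ℓ t₂| ≤ L * |t₁ - t₂|)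
    (B : ℝ) (hB : ∀ w : Fin c → E, norm2q q w ≤ Λ →
      ∀ (x : X) (y : Fin c), ℓ (mcMargin (fun x' j => ⟪w j, φ x'⟫) x y) ≤ B)
    (δ : ℝ) (hδ : δ ∈ Set.Ioo (0 : ℝ) 1) :
    ENNReal.ofReal (1 - δ) ≤
      (Measure.pi fun _ : Fin n => P)
        {S : Fin n → X × Fin c | ∀ w : Fin c → E, norm2q q w ≤ Λ →
          (P {z : X × Fin c | mcMargin (fun x' j => ⟪w j, φ x'⟫) z.1 z.2 ≤ 0}).toReal ≤
            (1 / (n : ℝ)) * ∑ i, ℓ (mcMargin (fun x' j => ⟪w j, φ x'⟫) (S i).1 (S i).2)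
            + (4 * L * Λ * (c : ℝ) ^ (1 / (q / (q - 1))) *
                ((∫ x : ℝ, |x| ^ (q / (q - 1)) ∂(gaussianReal 0 1)) ^ (1 / (q / (q - 1)))) / n) *
              Real.sqrt ((π * (q / (q - 1)) / 2) * ∑ i, ‖φ (S i).1‖ ^ 2)
            + 3 * B * Real.sqrt (Real.log (2 / δ) / (2 * n))} := by
  have hpq : q.HolderConjugate (q / (q - 1)) := .conjExponent hq₁
  have hp : 2 ≤ q / (q - 1) := by rw [le_div_iff₀ hpq.sub_one_pos]; linarith
  have hn₀ : n ≠ 0 := Nat.one_le_iff_ne_zero.1 hn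
  obtain ⟨z₀⟩ := nonempty_of_isProbabilityMeasure P
  have hB₁ : 1 ≤ B := (hℓ₁ _ (mcMargin_zero _ _).le).trans
    (hB 0 ((norm2q_zero hpq.pos).trans_le hΛ.le) z₀.1 z₀.2)
  lift B to ℝ≥0 using zero_le_one.trans hB₁
  lift L to ℝ≥0 using by simpa using (abs_nonneg _).trans (hℓLip 1 0)
  have hℓ : LipschitzWith L ℓ := .of_dist_le_mul hℓLip
  have hmain := one_sub_exp_le_measure_forall_integral_marginLoss_le (P := P) (n := n) hc hφ hpq hp
    hΛ.le hℓ hℓ₀ (fun w hw z ↦ hB w hw z.1 z.2)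
    (by positivity : 0 ≤ n * (3 * B * √(log (2 / δ) / (2 * n))))
  rw [exp_neg_two_mul_sq_div_eq hn₀ (by positivity) hδ.1 (hδ.2.le.trans one_le_two),
    ← ENNReal.ofReal_one, ← ENNReal.ofReal_sub _ (half_pos hδ.1).le] at hmain
  refine ((ENNReal.ofReal_le_ofReal (by linarith [hδ.1])).trans hmain).trans
    (measure_mono fun S hS w hw ↦ ?_)
  have hint := integrable_marginLoss (P := P) hφ hℓ.continuous.measurable hℓ₀
    fun z ↦ hB w hw z.1 z.2
  refine (measureReal_mcMargin_le_zero_le_integral_marginLoss hℓ₀ hℓ₁ hint).trans ?_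
  refine (le_div_iff₀' (by positivity)).2 (hS w hw) |>.trans_eq ?_
  simp only [marginLoss, gaussianMoment]
  field_simp

/-- **Intermediate generalization bound for the `ℓ_q`-constrained multi-class hypothesis
class** (established inside the proof of Corollary 4): with `q* = q/(q−1)` and
`τ_{q*} = (E|g|^{q*})^{1/q*}` the `q*`-th Gaussian moment, with probability at least `1 − δ`
every `w` with `‖w‖_{2,q} ≤ Λ` satisfies
`R(h^w) ≤ (1/n) Σ_i ℓ(ρ_{h^w}(x_i,y_i)) + (4LΛ c^{1/q*} τ_{q*}/n) √((π q*/2) Σ_i k(x_i,x_i))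
  + 3 B_ℓ √(log(2/δ)/(2n))`. -/
theorem lq_norm_multiclass_generalization_bound
    {X E : Type*} [MeasurableSpace X] [NormedAddCommGroup E] [InnerProductSpace ℝ E]
    [CompleteSpace E] [MeasurableSpace E] [BorelSpace E]
    (n c : ℕ) (hn : 1 ≤ n) (hc : 2 ≤ c)
    (P : Measure (X × Fin c)) [IsProbabilityMeasure P]
    (φ : X → E) (hφ : Measurable φ)
    (q : ℝ) (hq₁ : 1 < q) (hq₂ : q ≤ 2) (Λ : ℝ) (hΛ : 0 < Λ)
    (ℓ : ℝ → ℝ) (L : ℝ)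
    (hℓ₁ : ∀ t ≤ (0 : ℝ), 1 ≤ ℓ t) (hℓ₀ : ∀ t, 0 ≤ ℓ t)
    (hℓLip : ∀ t₁ t₂, |ℓ t₁ - ℓ t₂| ≤ L * |t₁ - t₂|)
    (hℓanti : ∀ s t : ℝ, s ≤ t → ℓ t ≤ ℓ s)
    (hℓzero : ∃ cℓ : ℝ, ℓ cℓ = 0)
    (B : ℝ) (hB : ∀ w : Fin c → E, norm2q q w ≤ Λ →
      ∀ (x : X) (y : Fin c), ℓ (mcMargin (fun x' j => ⟪w j, φ x'⟫) x y) ≤ B)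
    (δ : ℝ) (hδ : δ ∈ Set.Ioo (0 : ℝ) 1) :
    ENNReal.ofReal (1 - δ) ≤
      (Measure.pi fun _ : Fin n => P)
        {S : Fin n → X × Fin c | ∀ w : Fin c → E, norm2q q w ≤ Λ →
          (P {z : X × Fin c | mcMargin (fun x' j => ⟪w j, φ x'⟫) z.1 z.2 ≤ 0}).toReal ≤
            (1 / (n : ℝ)) * ∑ i, ℓ (mcMargin (fun x' j => ⟪w j, φ x'⟫) (S i).1 (S i).2)
            + (4 * L * Λ * (c : ℝ) ^ (1 / (q / (q - 1))) *
                ((∫ x : ℝ, |x| ^ (q / (q - 1)) ∂(gaussianReal 0 1)) ^ (1 / (q / (q - 1)))) / n) *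
              Real.sqrt ((π * (q / (q - 1)) / 2) * ∑ i, ‖φ (S i).1‖ ^ 2)
            + 3 * B * Real.sqrt (Real.log (2 / δ) / (2 * n))} :=
  lq_norm_multiclass_generalization_bound_general n c hn hc P φ hφ q hq₁ hq₂ Λ hΛ ℓ L
    hℓ₁ hℓ₀ hℓLip B hB δ hδ
end
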